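/- arXiv:2005.10931 — 6 statements merged into one kernel-verified Lean document; each statement's English description precedes it below -/
import Mathlib

section
/- Let F_q be the finite field with q elements and F_{q^h} its degree-h extension. Let U be an F_q-subspace of (F_{q^h})² with dim_{F_q} U = 4 such that the linear set L = L_U has exactly q³ + 1 points. Then exactly one of the following holds (weights taken with respect to U): (a) L contains exactly one point of weight 3 and exactly q³ points of weight 1 (and no other points); or (b) L contains exactly q + 1 points of weight 2 and exactly q³ − q points of weight 1 (and no other points). -/
/-!
The result is a double count. The nonzero vectors of `U` are partitioned by the points of `L_U`
they span, and a point of weight `w` receives exactly `q^w - 1` of them. With `t_i` the number of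
points of weight `i`, which can only be `1, 2, 3, 4`, this gives
`∑ t_i (q^i - 1) = q^4 - 1`, while `∑ t_i = q^3 + 1` by hypothesis. Subtracting `q - 1` times the
second equation from the first and dividing by `q (q - 1)` leaves
`t_2 + (q + 1) t_3 + (q^2 + q + 1) t_4 = q + 1`.
Hence `t_4 = 0` and either `t_3 = 1, t_2 = 0` or `t_3 = 0, t_2 = q + 1`.
-/

open Polynomial

/-- The `F_q`-linear set `L_U = {⟨u⟩ : u ∈ U \ {0}}` determined by an `F`-subspace `U` of
`E^n`; points of `PG(n-1, E)` are modelled as the `1`-dimensional `E`-subspaces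
`span E {u}`, `u ≠ 0`. -/
def linearSet {F E : Type*} [Field F] [Field E] [Algebra F E] {n : ℕ}
    (U : Submodule F (Fin n → E)) : Set (Submodule E (Fin n → E)) :=
  {W | ∃ u ∈ U, u ≠ 0 ∧ W = Submodule.span E {u}}

/-- The *weight* (with respect to `U`) of a point `W` of `PG(n-1, E)`:
the `F`-dimension of `U ∩ W`. -/
noncomputable def weightOf {F E : Type*} [Field F] [Field E] [Algebra F E] {n : ℕ}
    (U : Submodule F (Fin n → E)) (W : Submodule E (Fin n → E)) : ℕ :=
  Module.finrank F ↥(U ⊓ Submodule.restrictScalars F W)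

section LinearSetCounting

variable {F E : Type*} [Field F] [Fintype F] [Field E] [Fintype E] [Algebra F E]
  {n : ℕ} (U : Submodule F (Fin n → E))

lemma weightOf_le_finrank (W : Submodule E (Fin n → E)) :
    weightOf U W ≤ Module.finrank F U :=
  Submodule.finrank_mono inf_le_left

lemma one_le_weightOf {W : Submodule E (Fin n → E)} (hW : W ∈ linearSet U) :
    1 ≤ weightOf U W := by
  obtain ⟨u, hu, hu0, rfl⟩ := hW
  have hne : U ⊓ Submodule.restrictScalars F (Submodule.span E {u}) ≠ ⊥ := by
    intro hbot
    exact hu0 ((Submodule.eq_bot_iff _).1 hbot u ⟨hu, Submodule.mem_span_singleton_self u⟩)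
  exact Submodule.one_le_finrank_iff.2 hne

lemma card_nonzero_add_one (V : Submodule F (Fin n → E)) :
    {u : Fin n → E | u ∈ V ∧ u ≠ 0}.ncard + 1 = Fintype.card F ^ Module.finrank F V := by
  have h1 : {u : Fin n → E | u ∈ V ∧ u ≠ 0} = (V : Set (Fin n → E)) \ {0} := by
    ext u; simp
  rw [h1, Set.ncard_sdiff_singleton_add_one V.zero_mem (Set.toFinite _), ← Nat.card_coe_set_eq,
    ← Nat.card_eq_fintype_card]
  exact Module.natCard_eq_pow_finrank (K := F) (V := V)

/-- For a point of `L_U`, the vectors of `U` spanning it are the nonzero vectors of `U` lying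
on it. -/
lemma fiber_eq {W : Submodule E (Fin n → E)} (hW : W ∈ linearSet U) :
    {u : Fin n → E | (u ∈ U ∧ u ≠ 0) ∧ Submodule.span E {u} = W} =
      {u : Fin n → E | u ∈ U ⊓ Submodule.restrictScalars F W ∧ u ≠ 0} := by
  obtain ⟨v, -, -, rfl⟩ := hW
  ext u
  constructor
  · rintro ⟨⟨hu, hu0⟩, hs⟩
    refine ⟨⟨hu, ?_⟩, hu0⟩
    change u ∈ Submodule.span E {v}
    rw [← hs]
    exact Submodule.mem_span_singleton_self u
  · rintro ⟨⟨hu, hs⟩, hu0⟩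
    refine ⟨⟨hu, hu0⟩, ?_⟩
    obtain ⟨a, rfl⟩ := Submodule.mem_span_singleton.1 (show u ∈ Submodule.span E {v} from hs)
    have ha : a ≠ 0 := by
      rintro rfl
      simp at hu0
    exact Submodule.span_singleton_smul_eq ha.isUnit v

open Classical in
/-- The double count `∑ (q^w - 1) = q^k - 1` of the nonzero vectors of `U`, with the subtracted
terms moved across so that no truncated subtraction occurs. -/
lemma sum_pow_weightOf :
    (∑ W ∈ (linearSet U).toFinset, Fintype.card F ^ weightOf U W) + 1 =
      Fintype.card F ^ Module.finrank F U + (linearSet U).ncard := by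
  have hmaps : ∀ u ∈ ({u : Fin n → E | u ∈ U ∧ u ≠ 0}).toFinset,
      Submodule.span E {u} ∈ (linearSet U).toFinset := by
    intro u hu
    rw [Set.mem_toFinset] at hu ⊢
    exact ⟨u, hu.1, hu.2, rfl⟩
  have hfib := Finset.card_eq_sum_card_fiberwise hmaps
  rw [← card_nonzero_add_one U, Set.ncard_eq_toFinset_card', hfib,
    Set.ncard_eq_toFinset_card' (linearSet U), Finset.card_eq_sum_ones (linearSet U).toFinset,
    add_right_comm, ← Finset.sum_add_distrib]
  congr 1
  refine Finset.sum_congr rfl fun W hW => ?_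
  rw [Set.mem_toFinset] at hW
  rw [weightOf, ← card_nonzero_add_one, ← fiber_eq U hW, Set.ncard_eq_toFinset_card']
  congr 2
  ext u
  simp

open Classical in
/-- Grouping a sum over `L_U` by weight when `U` has rank `4`. -/
lemma sum_by_weight (hU : Module.finrank F U = 4) (f : ℕ → ℕ) :
    ∑ W ∈ (linearSet U).toFinset, f (weightOf U W) =
      {W ∈ linearSet U | weightOf U W = 1}.ncard * f 1 +
      {W ∈ linearSet U | weightOf U W = 2}.ncard * f 2 +
      {W ∈ linearSet U | weightOf U W = 3}.ncard * f 3 +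
      {W ∈ linearSet U | weightOf U W = 4}.ncard * f 4 := by
  have hmaps : ∀ W ∈ (linearSet U).toFinset, weightOf U W ∈ Finset.Icc 1 4 := by
    intro W hW
    rw [Set.mem_toFinset] at hW
    exact Finset.mem_Icc.2 ⟨one_le_weightOf U hW, hU ▸ weightOf_le_finrank U W⟩
  have hterm : ∀ i, ∑ W ∈ (linearSet U).toFinset with weightOf U W = i, f (weightOf U W) =
      {W ∈ linearSet U | weightOf U W = i}.ncard * f i := by
    intro i
    rw [Finset.sum_congr rfl (g := fun _ => f i)
      (fun W hW => by rw [(Finset.mem_filter.1 hW).2]), Finset.sum_const, smul_eq_mul,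
      Set.ncard_eq_toFinset_card']
    congr 2
    ext W
    simp
  rw [← Finset.sum_fiberwise_of_maps_to hmaps, Finset.sum_congr rfl fun i _ => hterm i,
    show Finset.Icc 1 4 = {1, 2, 3, 4} from rfl]
  simp [add_assoc]

end LinearSetCounting

/-- The arithmetic of the two counting equations. -/
lemma weight_distribution_cases {q t1 t2 t3 t4 : ℕ} (hq : 2 ≤ q)
    (hpts : t1 + t2 + t3 + t4 = q ^ 3 + 1)
    (hvec : t1 * q ^ 1 + t2 * q ^ 2 + t3 * q ^ 3 + t4 * q ^ 4 + 1 = q ^ 4 + (q ^ 3 + 1)) :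
    t4 = 0 ∧ (t3 = 1 ∧ t2 = 0 ∧ t1 = q ^ 3 ∨ t3 = 0 ∧ t2 = q + 1 ∧ t1 = q ^ 3 - q) := by
  have key : t2 + (q + 1) * t3 + (q ^ 2 + q + 1) * t4 = q + 1 := by
    zify at hpts hvec ⊢
    have hq' : (2 : ℤ) ≤ q := by exact_mod_cast hq
    have h0 : (q : ℤ) * (q - 1) ≠ 0 := mul_ne_zero (by linarith) (by linarith)
    apply mul_left_cancel₀ h0
    linear_combination hvec - q * hpts
  have h4 : t4 = 0 := by
    by_contra h
    have : 1 ≤ t4 := Nat.one_le_iff_ne_zero.2 h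
    nlinarith
  subst h4
  have h3 : t3 ≤ 1 := by
    by_contra! h
    nlinarith
  refine ⟨rfl, ?_⟩
  interval_cases t3
  · right; omega
  · left; omega

/-- dichotomy for rank-4 linear sets of size `q^3 + 1`, Section 2.2.3 of
the paper: exactly one of (a) a club (one point of weight 3, `q^3` points of weight 1),
or (b) `q + 1` points of weight 2 and `q^3 - q` points of weight 1. -/
theorem stmt12 (q h : ℕ) (F E : Type*) [Field F] [Fintype F] [Field E] [Fintype E]
    [Algebra F E] (hq : Fintype.card F = q) (hE : Fintype.card E = q ^ h)
    (U : Submodule F (Fin 2 → E)) (hU : Module.finrank F U = 4)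
    (hL : (linearSet U).ncard = q ^ 3 + 1) :
    Xor'
      ({W ∈ linearSet U | weightOf U W = 3}.ncard = 1 ∧
       {W ∈ linearSet U | weightOf U W = 1}.ncard = q ^ 3 ∧
       (∀ W ∈ linearSet U, weightOf U W = 3 ∨ weightOf U W = 1))
      ({W ∈ linearSet U | weightOf U W = 2}.ncard = q + 1 ∧
       {W ∈ linearSet U | weightOf U W = 1}.ncard = q ^ 3 - q ∧
       (∀ W ∈ linearSet U, weightOf U W = 2 ∨ weightOf U W = 1)) := by
  classical
  have hq2 : 2 ≤ q := hq ▸ Fintype.one_lt_card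
  have hpts := sum_by_weight U hU fun _ => 1
  have hvec := sum_pow_weightOf U
  rw [sum_by_weight U hU fun i => Fintype.card F ^ i, hU, hL, hq] at hvec
  rw [← Finset.card_eq_sum_ones, ← Set.ncard_eq_toFinset_card', hL] at hpts
  simp only [mul_one] at hpts
  have hempty : ∀ i, {W ∈ linearSet U | weightOf U W = i}.ncard = 0 →
      ∀ W ∈ linearSet U, weightOf U W ≠ i := by
    intro i hi W hW hw
    have hmem : W ∈ {W ∈ linearSet U | weightOf U W = i} := ⟨hW, hw⟩
    rw [(Set.ncard_eq_zero (Set.toFinite _)).1 hi] at hmem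
    exact hmem
  have hrange : ∀ W ∈ linearSet U, 1 ≤ weightOf U W ∧ weightOf U W ≤ 4 := fun W hW =>
    ⟨one_le_weightOf U hW, hU ▸ weightOf_le_finrank U W⟩
  obtain ⟨h4, ⟨h3, h2, h1⟩ | ⟨h3, h2, h1⟩⟩ := weight_distribution_cases hq2 hpts.symm hvec
  · refine Or.inl ⟨⟨h3, h1, fun W hW => ?_⟩, fun hb => ?_⟩
    · have := hrange W hW
      have := hempty 4 h4 W hW
      have := hempty 2 h2 W hW
      omega
    · have := hb.1
      omega
  · refine Or.inr ⟨⟨h2, h1, fun W hW => ?_⟩, fun ha => ?_⟩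
    · have := hrange W hW
      have := hempty 4 h4 W hW
      have := hempty 3 h3 W hW
      omega
    · have := ha.1
      omega
end

section
/- Let F_q be the finite field with q elements and F_{q^h} its degree-h extension. Let U be an F_q-subspace of (F_{q^h})² with dim_{F_q} U = 5 such that the linear set L = L_U has exactly q⁴ + 1 points. Then exactly one of the following holds (weights taken with respect to U): (a) L contains exactly one point of weight 4 and exactly q⁴ points of weight 1; or (b) L contains exactly one point of weight 3, exactly q² points of weight 2, and exactly q⁴ − q² points of weight 1; or (c) L contains exactly q² + q + 1 points of weight 2 and exactly q⁴ − q² − q points of weight 1. -/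
/-!
Write `n_i` for the number of points of weight `i`. Each nonzero vector of `U` lies on exactly one
point of `L_U`, and a point of weight `w` carries `q ^ w - 1` of them, so
`∑ i, n_i (q ^ i - 1) = q ^ 5 - 1` (`sum_weight`). Combined with `∑ i, n_i = q ^ 4 + 1` this gives
`n_2 + (q + 1) n_3 + (q ^ 2 + q + 1) n_4 = q ^ 2 + q + 1` once `n_5 = 0` is known. Distinct points
meet `U` in independent subspaces, so their weights add up to at most `5`
(`weightOf_add_le`). Hence `n_5 = 0`, and `n_3, n_4 ≤ 1`; the cases `n_4 = 1`, `n_3 = 1` and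
`n_3 = n_4 = 0` are the three alternatives, told apart by the value of `n_1`.
-/

open Polynomial

section Points

variable {F E : Type*} [Field F] [Field E] [Algebra F E] {n : ℕ}

lemma span_eq_of_mem {u x : Fin n → E} (hx : x ≠ 0) (h : x ∈ Submodule.span E {u}) :
    Submodule.span E {x} = Submodule.span E {u} := by
  obtain ⟨a, rfl⟩ := Submodule.mem_span_singleton.1 h
  have ha : a ≠ 0 := by
    rintro rfl
    simp at hx
  exact Submodule.span_singleton_smul_eq (IsUnit.mk0 a ha) u

lemma span_eq_iff_mem {U : Submodule F (Fin n → E)} {W : Submodule E (Fin n → E)}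
    (hW : W ∈ linearSet U) {x : Fin n → E} (hx : x ≠ 0) :
    Submodule.span E {x} = W ↔ x ∈ W := by
  obtain ⟨u, -, -, rfl⟩ := hW
  exact ⟨fun h => h ▸ Submodule.mem_span_singleton_self x, span_eq_of_mem hx⟩

/-- Distinct points of `L_U` meet `U` in independent subspaces. -/
lemma weightOf_add_le [Finite E] {U : Submodule F (Fin n → E)} {W W' : Submodule E (Fin n → E)}
    (hW : W ∈ linearSet U) (hW' : W' ∈ linearSet U) (hne : W ≠ W') :
    weightOf U W + weightOf U W' ≤ Module.finrank F U := by
  have hd : (U ⊓ W.restrictScalars F) ⊓ (U ⊓ W'.restrictScalars F) = ⊥ := by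
    rw [Submodule.eq_bot_iff]
    rintro x ⟨⟨-, h1⟩, -, h2⟩
    by_contra hx
    exact hne (((span_eq_iff_mem hW hx).2 h1).symm.trans ((span_eq_iff_mem hW' hx).2 h2))
  have : Module.Finite F (Fin n → E) := Module.Finite.of_finite
  have key := Submodule.finrank_sup_add_finrank_inf_eq
    (U ⊓ W.restrictScalars F) (U ⊓ W'.restrictScalars F)
  rw [hd, finrank_bot, add_zero] at key
  unfold weightOf
  rw [← key]
  exact Submodule.finrank_mono (sup_le inf_le_left inf_le_left)

lemma weightOf_pos [Finite E] {U : Submodule F (Fin n → E)} {W : Submodule E (Fin n → E)}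
    (hW : W ∈ linearSet U) : 0 < weightOf U W := by
  obtain ⟨u, hu, hu0, rfl⟩ := hW
  have : Module.Finite F (Fin n → E) := Module.Finite.of_finite
  have : Nontrivial ↥(U ⊓ (Submodule.span E {u}).restrictScalars F) :=
    ⟨⟨⟨u, hu, Submodule.mem_span_singleton_self u⟩, 0, fun h => hu0 (congrArg Subtype.val h)⟩⟩
  exact Module.finrank_pos

lemma weightOf_le [Finite E] (U : Submodule F (Fin n → E)) (W : Submodule E (Fin n → E)) :
    weightOf U W ≤ Module.finrank F U := by
  have : Module.Finite F (Fin n → E) := Module.Finite.of_finite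
  exact Submodule.finrank_mono inf_le_left

lemma card_nonzero [Fintype F] [Fintype E] (V : Submodule F (Fin n → E)) :
    {x : Fin n → E | x ∈ V ∧ x ≠ 0}.ncard = Fintype.card F ^ Module.finrank F V - 1 := by
  have h1 : {x : Fin n → E | x ∈ V ∧ x ≠ 0} = (V : Set (Fin n → E)) \ {0} := by
    ext x; simp
  rw [h1, Set.ncard_sdiff_singleton_of_mem V.zero_mem, ← Nat.card_eq_fintype_card,
    ← Module.natCard_eq_pow_finrank (K := F) (V := V)]
  rfl

/-- Double count of the nonzero vectors of `U` by the point of `L_U` on which they lie. -/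
lemma sum_weight [Fintype F] [Fintype E] (U : Submodule F (Fin n → E))
    (S : Finset (Submodule E (Fin n → E))) (hS : ∀ W, W ∈ S ↔ W ∈ linearSet U) :
    ∑ W ∈ S, (Fintype.card F ^ weightOf U W - 1) = Fintype.card F ^ Module.finrank F U - 1 := by
  classical
  let T : Finset (Fin n → E) := {x | x ∈ U ∧ x ≠ 0}
  have hT : T.card = Fintype.card F ^ Module.finrank F U - 1 := by
    rw [← card_nonzero U, ← Set.ncard_coe_finset]
    simp [T]
  rw [← hT, Finset.card_eq_sum_card_fiberwise (f := fun x => Submodule.span E {x}) (t := S)]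
  · refine Finset.sum_congr rfl fun W hW => ?_
    unfold weightOf
    rw [← card_nonzero, ← Set.ncard_coe_finset]
    congr 1
    ext x
    by_cases hx : x = 0
    · simp [T, hx]
    · simp [T, hx, span_eq_iff_mem ((hS W).1 hW) hx]
  · intro x hx
    have hx' : x ∈ U ∧ x ≠ 0 := by simpa [T] using hx
    exact (hS _).2 ⟨x, hx'.1, hx'.2, rfl⟩

end Points

/-- The numerical part of the trichotomy, for `a, b, c, d` points of weights `1, 2, 3, 4`. -/
lemma trichotomy_arith {q a b c d : ℕ} (hq : 2 ≤ q) (h1 : a + b + c + d = q ^ 4 + 1)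
    (h2 : a * (q - 1) + b * (q ^ 2 - 1) + c * (q ^ 3 - 1) + d * (q ^ 4 - 1) = q ^ 5 - 1)
    (hc : c ≤ 1) (hd : d ≤ 1) :
    let A := d = 1 ∧ a = q ^ 4
    let B := c = 1 ∧ b = q ^ 2 ∧ a = q ^ 4 - q ^ 2
    let C := b = q ^ 2 + q + 1 ∧ a = q ^ 4 - q ^ 2 - q
    (A ∧ ¬B ∧ ¬C) ∨ (¬A ∧ B ∧ ¬C) ∨ (¬A ∧ ¬B ∧ C) := by
  have key : b + (q + 1) * c + (q ^ 2 + q + 1) * d = q ^ 2 + q + 1 := by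
    have e : ∀ k, 1 ≤ q ^ k := fun k => Nat.one_le_pow _ _ (by omega)
    zify [e 2, e 3, e 4, e 5, (by omega : 1 ≤ q)] at h1 h2 ⊢
    have hne : ((q : ℤ) - 1) * q ≠ 0 := mul_ne_zero (by omega) (by omega)
    apply mul_left_cancel₀ hne
    linear_combination h2 - (q - 1 : ℤ) * h1
  have h4 : q ^ 2 + q < q ^ 4 := by nlinarith [Nat.pow_le_pow_left hq 2]
  have h22 : 4 ≤ q ^ 2 := by nlinarith
  intro A B C
  simp only [A, B, C]
  generalize q ^ 4 = q4 at *
  generalize q ^ 2 = q2 at *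
  obtain rfl | rfl : d = 0 ∨ d = 1 := by omega
  · obtain rfl | rfl : c = 0 ∨ c = 1 := by omega
    · omega
    · omega
  · rw [mul_one] at key
    have hb : b = 0 := by omega
    have hc0 : c = 0 := by
      obtain rfl | rfl : c = 0 ∨ c = 1 := by omega
      · rfl
      · omega
    omega

/-- trichotomy for rank-5 linear sets of size `q^4 + 1`, Section 2.2.4 of
the paper: exactly one of (a), (b), (c) holds. -/
theorem stmt13 (q h : ℕ) (F E : Type*) [Field F] [Fintype F] [Field E] [Fintype E]
    [Algebra F E] (hq : Fintype.card F = q) (hE : Fintype.card E = q ^ h)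
    (U : Submodule F (Fin 2 → E)) (hU : Module.finrank F U = 5)
    (hL : (linearSet U).ncard = q ^ 4 + 1) :
    let A := {W ∈ linearSet U | weightOf U W = 4}.ncard = 1 ∧
             {W ∈ linearSet U | weightOf U W = 1}.ncard = q ^ 4
    let B := {W ∈ linearSet U | weightOf U W = 3}.ncard = 1 ∧
             {W ∈ linearSet U | weightOf U W = 2}.ncard = q ^ 2 ∧
             {W ∈ linearSet U | weightOf U W = 1}.ncard = q ^ 4 - q ^ 2
    let C := {W ∈ linearSet U | weightOf U W = 2}.ncard = q ^ 2 + q + 1 ∧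
             {W ∈ linearSet U | weightOf U W = 1}.ncard = q ^ 4 - q ^ 2 - q
    (A ∧ ¬B ∧ ¬C) ∨ (¬A ∧ B ∧ ¬C) ∨ (¬A ∧ ¬B ∧ C) := by
  classical
  subst hq
  have hq2 : 2 ≤ Fintype.card F := Fintype.one_lt_card
  obtain ⟨S, hS⟩ : ∃ S : Finset (Submodule E (Fin 2 → E)), ∀ W, W ∈ S ↔ W ∈ linearSet U :=
    ⟨(linearSet U).toFinite.toFinset, fun W => by simp⟩
  have hN : ∀ i, {W ∈ linearSet U | weightOf U W = i}.ncard =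
      (S.filter fun W => weightOf U W = i).card := fun i => by
    rw [← Set.ncard_coe_finset]
    congr 1
    ext W
    simp [hS]
  have hcard : S.card = Fintype.card F ^ 4 + 1 := by
    rw [← hL, ← Set.ncard_coe_finset]
    congr 1
    ext W
    simp [hS]
  have hpair : ∀ W ∈ S, ∀ W' ∈ S, W ≠ W' → weightOf U W + weightOf U W' ≤ 5 :=
    fun W hW W' hW' hne => hU ▸ weightOf_add_le ((hS W).1 hW) ((hS W').1 hW') hne
  have hpos : ∀ W ∈ S, 0 < weightOf U W := fun W hW => weightOf_pos ((hS W).1 hW)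
  have hS1 : 1 < S.card := by
    have : 0 < Fintype.card F ^ 4 := by positivity
    omega
  -- A point of weight `5` would leave no room for a second point.
  have hmaps : ∀ W ∈ S, weightOf U W ∈ Finset.Icc 1 4 := fun W hW => by
    obtain ⟨W', hW', hne⟩ := Finset.exists_mem_ne hS1 W
    have := hpair W hW W' hW' hne.symm
    have := hpos W' hW'
    have := hpos W hW
    rw [Finset.mem_Icc]
    omega
  have hone : ∀ i, 3 ≤ i → (S.filter fun W => weightOf U W = i).card ≤ 1 := fun i hi => by
    rw [Finset.card_le_one]
    intro W hW W' hW'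
    rw [Finset.mem_filter] at hW hW'
    by_contra hne
    have := hpair W hW.1 W' hW'.1 hne
    omega
  have h1 := Finset.card_eq_sum_card_fiberwise hmaps
  have h2 := sum_weight U S hS
  rw [← Finset.sum_fiberwise_of_maps_to hmaps] at h2
  have h3 : ∀ i, ∑ W ∈ S with weightOf U W = i, (Fintype.card F ^ weightOf U W - 1) =
      (S.filter fun W => weightOf U W = i).card * (Fintype.card F ^ i - 1) := fun i => by
    rw [Finset.sum_congr rfl (g := fun _ => Fintype.card F ^ i - 1), Finset.sum_const, smul_eq_mul]
    intro W hW
    rw [(Finset.mem_filter.1 hW).2]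
  have hI : Finset.Icc 1 4 = ({1, 2, 3, 4} : Finset ℕ) := by decide
  simp only [h3, hI, hU] at h1 h2
  simp only [hN]
  apply trichotomy_arith hq2 _ _ (hone 3 le_rfl) (hone 4 (by norm_num))
  · rw [← hcard, h1]
    simp [add_assoc]
  · rw [← h2]
    simp [add_assoc]
end

section
/- Let F_q be the finite field with q elements and F_{q^h} its degree-h extension. Let U be an F_q-subspace of (F_{q^h})² with dim_{F_q} U = 4 such that the linear set L = L_U has exactly q³ + 1 points and contains exactly q + 1 points of weight 2 (with respect to U). Then there exist α ∈ F_{q^h} with [F_q(α):F_q] ≥ 3, a field automorphism σ of F_{q^h}, and a σ-semilinear bijection g of (F_{q^h})², such that the induced map on PG(1,q^h) maps L onto the set {⟨(μ1 + μ2·α, μ3 + μ4·α)⟩ : μ1, μ2, μ3, μ4 ∈ F_q, (μ1,μ2,μ3,μ4) ≠ (0,0,0,0)}. -/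
/-!
Since `q + 1 ≥ 3`, there are three distinct points `W₁, W₂, W₃` of weight 2. The traces
`U₁, U₂` of `U` on the first two have dimension 2 and meet trivially, so `U = U₁ ⊕ U₂`. Write
`U₃ = ⟨u, α u⟩` with `α ∉ F`. Splitting `u = v + y` along `U₁ ⊕ U₂`, the vector `α u ∈ U` splits
as `α v + α y`, so also `α v ∈ U₁` and `α y ∈ U₂`; by dimension
`U = ⟨v, α v, y, α y⟩` over `F`. The `E`-linear map sending `v, y` to the standard basis (with
trivial field automorphism) is then the required equivalence.

If `α` had degree at most 2, then `F(α)` would have at most `q ^ 2` elements, and every point of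
the image would be `⟨(0, 1)⟩` or `⟨(1, c)⟩` with `c ∈ F(α)`: at most `q ^ 2 + 1` points, contrary
to the size `q ^ 3 + 1`.
-/

open Polynomial

/-- The point set `{⟨(μ₁ + μ₂ α, μ₃ + μ₄ α)⟩}` of the projective line over `E`. -/
def modelSet (F : Type*) {E : Type*} [Field F] [Field E] [Algebra F E] (α : E) :
    Set (Submodule E (Fin 2 → E)) :=
  {W : Submodule E (Fin 2 → E) | ∃ μ : Fin 4 → F, μ ≠ 0 ∧
    W = Submodule.span E
      {![algebraMap F E (μ 0) + algebraMap F E (μ 1) * α,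
         algebraMap F E (μ 2) + algebraMap F E (μ 3) * α]}}

/-- If `α` has degree at most 2, every nonzero member of the model set is `⟨(0, 1)⟩` or `⟨(1, c)⟩`
with `c` in the field `F(α)`, of size at most `q ^ 2`. The bound is `q ^ 2 + 2` because the zero
subspace is also a member when `α ∈ F`. -/
lemma modelSet_ncard_le {F E : Type*} [Field F] [Fintype F] [Field E] [Fintype E]
    [Algebra F E] (α : E) (hα : (minpoly F α).natDegree ≤ 2) :
    (modelSet F α).ncard ≤ Fintype.card F ^ 2 + 2 := by
  classical
  let K := IntermediateField.adjoin F {α}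
  have hfin : Module.finrank F K ≤ 2 := by
    rw [IntermediateField.adjoin.finrank (Algebra.IsIntegral.isIntegral α)]
    exact hα
  have hK : Nat.card K ≤ Fintype.card F ^ 2 := by
    rw [Module.natCard_eq_pow_finrank (K := F) (V := K), Nat.card_eq_fintype_card]
    exact Nat.pow_le_pow_right Fintype.card_pos hfin
  have hαK : α ∈ K := IntermediateField.mem_adjoin_simple_self F α
  have hmem (a b : F) : algebraMap F E a + algebraMap F E b * α ∈ K :=
    add_mem (K.algebraMap_mem a) (mul_mem (K.algebraMap_mem b) hαK)
  let f : K → Submodule E (Fin 2 → E) := fun c => Submodule.span E {![1, (c : E)]}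
  have hsub : modelSet F α ⊆ insert ⊥ (insert (Submodule.span E {![0, 1]}) (Set.range f)) := by
    rintro W ⟨μ, hμ, rfl⟩
    by_cases h0 : algebraMap F E (μ 0) + algebraMap F E (μ 1) * α = 0
    · by_cases h1 : algebraMap F E (μ 2) + algebraMap F E (μ 3) * α = 0
      · left
        rw [h0, h1]
        simp
      · right; left
        rw [h0, ← Submodule.span_singleton_smul_eq (IsUnit.mk0 _ h1) ![0, 1]]
        simp
    · right; right
      refine ⟨⟨_, div_mem (hmem (μ 2) (μ 3)) (hmem (μ 0) (μ 1))⟩, ?_⟩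
      simp only [f]
      rw [← Submodule.span_singleton_smul_eq (IsUnit.mk0 _ h0)]
      congr 2
      simp [mul_div_cancel₀ _ h0]
  have hr : (Set.range f).ncard ≤ Nat.card K := by
    rw [← Set.image_univ, ← Set.ncard_univ]
    exact Set.ncard_image_le
  have h1 := Set.ncard_le_ncard hsub
  have h2 := Set.ncard_insert_le (⊥ : Submodule E (Fin 2 → E))
    (insert (Submodule.span E {![0, 1]}) (Set.range f))
  have h3 := Set.ncard_insert_le (Submodule.span E {![(0 : E), 1]}) (Set.range f)
  omega

/-- Distinct points of the projective line have no common nonzero vector. -/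
lemma mem_inf_points_eq_zero {E : Type*} [Field E] {n : ℕ} {u v x : Fin n → E}
    (hne : Submodule.span E {u} ≠ Submodule.span E {v})
    (hx : x ∈ Submodule.span E {u}) (hx' : x ∈ Submodule.span E {v}) : x = 0 := by
  by_contra h0
  have key {w : Fin n → E} (hw : x ∈ Submodule.span E {w}) :
      Submodule.span E {w} = Submodule.span E {x} := by
    obtain ⟨c, rfl⟩ := Submodule.mem_span_singleton.1 hw
    have hc : c ≠ 0 := by rintro rfl; simp at h0
    exact (Submodule.span_singleton_smul_eq (IsUnit.mk0 _ hc) w).symm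
  exact hne ((key hx).trans (key hx').symm)

/-- Three points of weight 2 put `U` in the form `⟨v, α v, y, α y⟩` with `v, y` a basis of `E ^ 2`
and these four generators independent over `F`. In the proof `v + y` spans the third
point, and `v`, `y` are its components on the other two. -/
lemma exists_normal_form {F E : Type*} [Field F] [Fintype F] [Field E] [Fintype E]
    [Algebra F E] (U : Submodule F (Fin 2 → E)) (hU : Module.finrank F U = 4)
    {W₁ W₂ W₃ : Submodule E (Fin 2 → E)}
    (h₁ : W₁ ∈ linearSet U) (h₂ : W₂ ∈ linearSet U) (h₃ : W₃ ∈ linearSet U)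
    (w₁ : weightOf U W₁ = 2) (w₂ : weightOf U W₂ = 2) (w₃ : weightOf U W₃ = 2)
    (h12 : W₁ ≠ W₂) (h13 : W₁ ≠ W₃) (h23 : W₂ ≠ W₃) :
    ∃ (α : E) (v y : Fin 2 → E), LinearIndependent E ![v, y] ∧
      ∃ φ : (Fin 4 → F) →ₗ[F] (Fin 2 → E), Function.Injective φ ∧ LinearMap.range φ = U ∧
        ∀ μ, φ μ = (algebraMap F E (μ 0) + algebraMap F E (μ 1) * α) • v
          + (algebraMap F E (μ 2) + algebraMap F E (μ 3) * α) • y := by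
  obtain ⟨u₁, hu₁, hu₁0, rfl⟩ := h₁
  obtain ⟨u₂, hu₂, hu₂0, rfl⟩ := h₂
  obtain ⟨u, hu, hu0, rfl⟩ := h₃
  unfold weightOf at w₁ w₂ w₃
  set U₁ := U ⊓ Submodule.restrictScalars F (Submodule.span E {u₁}) with hU₁
  set U₂ := U ⊓ Submodule.restrictScalars F (Submodule.span E {u₂}) with hU₂
  set U₃ := U ⊓ Submodule.restrictScalars F (Submodule.span E {u}) with hU₃
  have hsup : U₁ ⊔ U₂ = U := by
    apply Submodule.eq_of_le_of_finrank_eq (sup_le inf_le_left inf_le_left)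
    have hinf : U₁ ⊓ U₂ = ⊥ := by
      rw [eq_bot_iff]
      rintro x ⟨⟨-, hx⟩, ⟨-, hx'⟩⟩
      exact mem_inf_points_eq_zero h12 hx hx'
    have := Submodule.finrank_sup_add_finrank_inf_eq U₁ U₂
    rw [hinf, finrank_bot] at this
    omega
  obtain ⟨x₂, hx₂, hx₂n⟩ : ∃ x ∈ U₃, x ∉ Submodule.span F {u} := by
    by_contra! hcon
    have := Submodule.finrank_mono (R := F) (show U₃ ≤ Submodule.span F {u} from hcon)
    rw [finrank_span_singleton hu0, w₃] at this
    omega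
  obtain ⟨α, rfl⟩ := Submodule.mem_span_singleton.1 hx₂.2
  have hαF (a : F) : algebraMap F E a ≠ α := by
    rintro rfl
    exact hx₂n (Submodule.mem_span_singleton.2 ⟨a, by rw [algebraMap_smul]⟩)
  have hind (a b : F) (hab : algebraMap F E a + algebraMap F E b * α = 0) : a = 0 ∧ b = 0 := by
    have hb : b = 0 := by
      by_contra hb
      apply hαF (-a / b)
      have : algebraMap F E b ≠ 0 := by simpa using hb
      rw [map_div₀, map_neg, div_eq_iff this]
      linear_combination -hab
    subst hb
    simpa using hab
  obtain ⟨v, hv, y, hy, hvy⟩ := Submodule.mem_sup.1 (hsup.symm ▸ hu : u ∈ U₁ ⊔ U₂)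
  obtain ⟨v', hv', y', hy', hvy'⟩ := Submodule.mem_sup.1 (hsup.symm ▸ hx₂.1 : α • u ∈ U₁ ⊔ U₂)
  have hsv : α • v ∈ Submodule.span E {u₁} := Submodule.smul_mem _ _ hv.2
  have hsy : α • y ∈ Submodule.span E {u₂} := Submodule.smul_mem _ _ hy.2
  have heq : v' - α • v = α • y - y' := by
    rw [← hvy, smul_add] at hvy'
    rw [sub_eq_sub_iff_add_eq_add, hvy', add_comm]
  have hv'0 : v' - α • v = 0 :=
    mem_inf_points_eq_zero h12 (Submodule.sub_mem _ hv'.2 hsv)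
      (heq ▸ Submodule.sub_mem _ hsy hy'.2)
  have hαv : α • v ∈ U := by rw [← sub_eq_zero.1 hv'0]; exact hv'.1
  have hαy : α • y ∈ U := by rw [hv'0] at heq; rw [sub_eq_zero.1 heq.symm]; exact hy'.1
  have hv0 : v ≠ 0 := by
    rintro rfl
    rw [zero_add] at hvy
    exact hu0 (mem_inf_points_eq_zero h23 (hvy ▸ hy.2) (Submodule.mem_span_singleton_self u))
  have hy0 : y ≠ 0 := by
    rintro rfl
    rw [add_zero] at hvy
    exact hu0 (mem_inf_points_eq_zero h13 (hvy ▸ hv.2) (Submodule.mem_span_singleton_self u))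
  have hli : LinearIndependent E ![v, y] := by
    rw [LinearIndependent.pair_iff]
    intro s t hst
    have hs : s • v = 0 := by
      refine mem_inf_points_eq_zero h12 (Submodule.smul_mem _ _ hv.2) ?_
      rw [eq_neg_of_add_eq_zero_left hst]
      exact Submodule.neg_mem _ (Submodule.smul_mem _ _ hy.2)
    rw [hs, zero_add] at hst
    exact ⟨(smul_eq_zero.1 hs).resolve_right hv0, (smul_eq_zero.1 hst).resolve_right hy0⟩
  let φ : (Fin 4 → F) →ₗ[F] (Fin 2 → E) :=
    { toFun := fun μ => (algebraMap F E (μ 0) + algebraMap F E (μ 1) * α) • v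
        + (algebraMap F E (μ 2) + algebraMap F E (μ 3) * α) • y
      map_add' := by intro a b; simp only [Pi.add_apply, map_add]; module
      map_smul' := by
        intro c a
        ext i
        simp [Algebra.smul_def]
        ring }
  have hφ : Function.Injective φ := by
    rw [injective_iff_map_eq_zero]
    intro μ hμ
    obtain ⟨ha, hb⟩ := LinearIndependent.pair_iff.1 hli _ _ hμ
    obtain ⟨h0, h1⟩ := hind _ _ ha
    obtain ⟨h2, h3⟩ := hind _ _ hb
    ext i
    fin_cases i <;> assumption
  have hrange : LinearMap.range φ = U := by
    apply Submodule.eq_of_le_of_finrank_eq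
    · rintro _ ⟨μ, rfl⟩
      have : φ μ = μ 0 • v + μ 1 • (α • v) + (μ 2 • y + μ 3 • (α • y)) := by
        ext i
        simp [φ, Algebra.smul_def]
        ring
      rw [this]
      exact U.add_mem (U.add_mem (U.smul_mem _ hv.1) (U.smul_mem _ hαv))
        (U.add_mem (U.smul_mem _ hy.1) (U.smul_mem _ hαy))
    · rw [LinearMap.finrank_range_of_inj hφ, hU]
      simp
  exact ⟨α, v, y, hli, φ, hφ, hrange, fun μ => rfl⟩

/-- Proposition 2.9 of the paper. Any rank-4 linear set of size
`q^3 + 1` with `q + 1` points of weight 2 is `PΓL(2,q^h)`-equivalent to the linear set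
`{⟨(μ1 + μ2 α, μ3 + μ4 α)⟩}` of Theorem 2.6 for some `α` with `[F_q(α):F_q] ≥ 3`. -/
theorem stmt14 (q h : ℕ) (F E : Type*) [Field F] [Fintype F] [Field E] [Fintype E]
    [Algebra F E] (hq : Fintype.card F = q) (hE : Fintype.card E = q ^ h)
    (U : Submodule F (Fin 2 → E)) (hU : Module.finrank F U = 4)
    (hL : (linearSet U).ncard = q ^ 3 + 1)
    (hw2 : {W ∈ linearSet U | weightOf U W = 2}.ncard = q + 1) :
    ∃ α : E, 3 ≤ (minpoly F α).natDegree ∧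
    ∃ (σ : E ≃+* E) (g : (Fin 2 → E) → (Fin 2 → E)),
      Function.Bijective g ∧
      (∀ x y, g (x + y) = g x + g y) ∧
      (∀ (c : E) (x), g (c • x) = σ c • g x) ∧
      {W' : Submodule E (Fin 2 → E) | ∃ W ∈ linearSet U,
          (W' : Set (Fin 2 → E)) = g '' (W : Set (Fin 2 → E))}
        = {W : Submodule E (Fin 2 → E) | ∃ μ : Fin 4 → F, μ ≠ 0 ∧
            W = Submodule.span E
              {![algebraMap F E (μ 0) + algebraMap F E (μ 1) * α,
                 algebraMap F E (μ 2) + algebraMap F E (μ 3) * α]}} := by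
  classical
  have hq2 : 2 ≤ q := hq ▸ Fintype.one_lt_card
  obtain ⟨W₁, W₂, W₃, h₁, h₂, h₃, h12, h13, h23⟩ :=
    (Set.two_lt_ncard_iff (Set.toFinite _)).1 (by rw [hw2]; omega)
  obtain ⟨α, v, y, hli, φ, hφ, rfl, hφv⟩ :=
    exists_normal_form U hU h₁.1 h₂.1 h₃.1 h₁.2 h₂.2 h₃.2 h12 h13 h23
  let b := basisOfLinearIndependentOfCardEqFinrank hli (by simp)
  let e : (Fin 2 → E) ≃ₗ[E] (Fin 2 → E) := b.equivFun
  have he (s t : E) : e (s • v + t • y) = ![s, t] := by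
    rw [← LinearEquiv.eq_symm_apply, Module.Basis.equivFun_symm_apply]
    simp [b]
  have hspan (x : Fin 2 → E) : (Submodule.span E {x}).map e.toLinearMap
      = Submodule.span E {e x} := by
    rw [Submodule.map_span, Set.image_singleton]; rfl
  have himage : Submodule.map e.toLinearMap '' linearSet (LinearMap.range φ) = modelSet F α := by
    ext W'
    constructor
    · rintro ⟨_, ⟨_, ⟨μ, rfl⟩, hx0, rfl⟩, rfl⟩
      refine ⟨μ, fun h => hx0 (by rw [h, map_zero]), ?_⟩
      rw [hspan, hφv, he]
    · rintro ⟨μ, hμ, rfl⟩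
      refine ⟨_, ⟨φ μ, ⟨μ, rfl⟩, (map_ne_zero_iff φ hφ).2 hμ, rfl⟩, ?_⟩
      rw [hspan, hφv, he]
  refine ⟨α, ?_, RingEquiv.refl E, e, e.bijective, map_add e, fun c x => map_smul e c x, ?_⟩
  · by_contra! hlt
    have hle := modelSet_ncard_le (F := F) α (by omega)
    rw [← himage, Set.ncard_image_of_injective _
      (Submodule.map_injective_of_injective e.injective), hL, hq] at hle
    nlinarith [Nat.pow_le_pow_left hq2 2]
  · change _ = modelSet F α
    rw [← himage]
    ext W'
    refine exists_congr fun W => and_congr_right fun _ => ?_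
    exact eq_comm.trans (SetLike.coe_set_eq (p := W.map e.toLinearMap) (q := W'))
end

section
/- Let F_q be the finite field with q elements and F_{q^h} its degree-h extension. Let U be an F_q-subspace of (F_{q^h})² with dim_{F_q} U = 5 such that the linear set L = L_U has exactly q⁴ + 1 points, contains exactly one point of weight 3 and exactly q² points of weight 2 (with respect to U). Assume the set of q² + 1 points of L of weight at least 2 is not an F_{q²}-subline, i.e., there is no 2-dimensional F_{q²}-subspace W of (F_{q^h})² (for F_{q²} a subfield of F_{q^h}) with {⟨w⟩ : w ∈ W \ {0}} equal to that set. Then there exist α ∈ F_{q^h} with [F_q(α):F_q] ≥ 4, a field automorphism σ of F_{q^h}, and a σ-semilinear bijection g of (F_{q^h})², such that the induced map on PG(1,q^h) maps L onto the set {⟨(μ1 + μ2·α, μ3 + μ4·α + μ5·α²)⟩ : μ1, …, μ5 ∈ F_q, not all zero}. -/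
open Polynomial

lemma mem_iff_of_linearIndependent {F V : Type*} [Field F] [AddCommGroup V] [Module F V]
    [FiniteDimensional F V] {n : ℕ} (N : Submodule F V) (hN : Module.finrank F N = n)
    (v : Fin n → V) (hv : LinearIndependent F v) (hvN : ∀ i, v i ∈ N) (x : V) :
    x ∈ N ↔ ∃ c : Fin n → F, ∑ i, c i • v i = x := by
  have hle : Submodule.span F (Set.range v) ≤ N := by
    rw [Submodule.span_le]; rintro _ ⟨i, rfl⟩; exact hvN i
  have heq : Submodule.span F (Set.range v) = N := by
    apply Submodule.eq_of_le_of_finrank_eq hle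
    rw [finrank_span_eq_card hv, hN, Fintype.card_fin]
  rw [← heq, Submodule.mem_span_range_iff_exists_fun]

/-- Let `B` be a plane containing `1`, `A` a 3-space, and suppose that the multipliers `y` with
`B * y ⊆ A` form a plane `M`. Then `B = ⟨1, α⟩`, and since `M` and `α M` meet in some `α m ≠ 0`,
`M = B m`. If `α² ∈ B` then `B` is a quadratic extension of `F`; otherwise
`A = ⟨1, α, α²⟩ m`, and `α` cannot be cubic since that would enlarge `M`. -/
lemma exists_common_multiplier {F E : Type*} [Field F] [Fintype F] [Field E] [Fintype E]
    [Algebra F E] (A B M : Submodule F E) (hA : Module.finrank F A = 3)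
    (hB : Module.finrank F B = 2) (h1 : (1 : E) ∈ B)
    (hM : ∀ y, y ∈ M ↔ ∀ x ∈ B, x * y ∈ A) (hM2 : Module.finrank F M = 2) :
    ∃ α m : E, m ≠ 0 ∧ LinearIndependent F ![1, α] ∧
      (∀ x, x ∈ B ↔ ∃ a b : F, x = algebraMap F E a + algebraMap F E b * α) ∧
      ((α * α ∈ B ∧ ∀ y, y ∈ M ↔ ∃ b ∈ B, y = b * m) ∨
       (4 ≤ (minpoly F α).natDegree ∧ LinearIndependent F ![1, α, α ^ 2] ∧
        ∀ y, y ∈ A ↔ ∃ a b c : F, y = (algebraMap F E a + algebraMap F E b * α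
          + algebraMap F E c * α ^ 2) * m)) := by
  have : FiniteDimensional F E := Module.Finite.of_finite
  obtain ⟨α, hαB, hα⟩ : ∃ α ∈ B, α ∉ Submodule.span F {(1 : E)} := by
    by_contra! hc
    have h := Submodule.finrank_mono (show B ≤ Submodule.span F {(1 : E)} from hc)
    rw [hB, finrank_span_singleton one_ne_zero] at h
    omega
  have hli : LinearIndependent F ![1, α] := by
    rw [LinearIndependent.pair_iff' one_ne_zero]
    intro a ha
    exact hα (Submodule.mem_span_singleton.2 ⟨a, ha⟩)
  have hα0 : α ≠ 0 := fun h => hα (h ▸ Submodule.zero_mem _)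
  have hBmem : ∀ x, x ∈ B ↔ ∃ a b : F, x = algebraMap F E a + algebraMap F E b * α := by
    intro x
    rw [mem_iff_of_linearIndependent B hB _ hli (by intro i; fin_cases i <;> simpa)]
    constructor
    · rintro ⟨c, rfl⟩; exact ⟨c 0, c 1, by simp [Algebra.smul_def]⟩
    · rintro ⟨a, b, rfl⟩; exact ⟨![a, b], by simp [Algebra.smul_def]⟩
  have hMmem : ∀ y, y ∈ M ↔ y ∈ A ∧ α * y ∈ A := by
    intro y
    rw [hM]
    constructor
    · intro h; exact ⟨by simpa using h 1 h1, h α hαB⟩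
    · rintro ⟨h0, h1⟩ x hx
      obtain ⟨a, b, rfl⟩ := (hBmem x).1 hx
      have := A.add_mem (A.smul_mem a h0) (A.smul_mem b h1)
      simpa [Algebra.smul_def, add_mul, mul_assoc] using this
  -- `M` and `α M` are planes in the 3-space `A`, hence meet nontrivially.
  obtain ⟨m, hm0, hmM, hαmM⟩ : ∃ m, m ≠ 0 ∧ m ∈ M ∧ α * m ∈ M := by
    have hinj : Function.Injective (LinearMap.mulLeft F α) := fun x y h => by
      simpa [hα0] using h
    have hr : Module.finrank F (M.map (LinearMap.mulLeft F α)) = 2 := by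
      rw [← hM2]
      exact (Submodule.equivMapOfInjective _ hinj M).finrank_eq.symm
    have hs : Module.finrank F ↥(M ⊔ M.map (LinearMap.mulLeft F α)) ≤ 3 := by
      rw [← hA]
      apply Submodule.finrank_mono
      apply sup_le
      · intro y hy; exact ((hMmem y).1 hy).1
      · rintro _ ⟨y, hy, rfl⟩; exact ((hMmem y).1 hy).2
    have hd := Submodule.finrank_sup_add_finrank_inf_eq M (M.map (LinearMap.mulLeft F α))
    have hne : M ⊓ M.map (LinearMap.mulLeft F α) ≠ ⊥ := by
      intro h
      rw [h, finrank_bot] at hd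
      omega
    obtain ⟨z, ⟨hz1, ⟨y, hy, rfl⟩⟩, hz0⟩ := (Submodule.ne_bot_iff _).1 hne
    exact ⟨y, by rintro rfl; simp at hz0, hy, hz1⟩
  have hscale : Function.Injective (LinearMap.mulRight F m) := fun x y h => by
    simpa [hm0] using h
  have hMB : ∀ y, y ∈ M ↔ ∃ b ∈ B, y = b * m := by
    have hBM : B.map (LinearMap.mulRight F m) = M := by
      apply Submodule.eq_of_le_of_finrank_eq
      · rintro _ ⟨b, hb, rfl⟩
        obtain ⟨a, c, rfl⟩ := (hBmem b).1 hb
        have := M.add_mem (M.smul_mem a hmM) (M.smul_mem c hαmM)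
        simpa [Algebra.smul_def, add_mul, mul_assoc] using this
      · rw [hM2, ← hB]
        exact (Submodule.equivMapOfInjective _ hscale B).finrank_eq.symm
    intro y
    rw [← hBM]
    simp [Submodule.mem_map, eq_comm]
  refine ⟨α, m, hm0, hli, hBmem, ?_⟩
  by_cases hsq : α * α ∈ B
  · exact Or.inl ⟨hsq, hMB⟩
  right
  have hli3 : LinearIndependent F ![1, α, α ^ 2] := by
    rw [Fintype.linearIndependent_iff]
    intro c hc
    simp only [Fin.sum_univ_three, Matrix.cons_val] at hc
    have hc2 : c 2 = 0 := by
      by_contra hne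
      apply hsq
      rw [← pow_two, ← Submodule.smul_mem_iff B hne]
      have : c 2 • α ^ 2 = -(c 0 • (1 : E) + c 1 • α) := by
        rw [eq_neg_iff_add_eq_zero, ← hc]; ring
      rw [this]
      exact B.neg_mem (B.add_mem (B.smul_mem _ h1) (B.smul_mem _ hαB))
    rw [hc2, zero_smul, add_zero] at hc
    obtain ⟨h0, h1⟩ := LinearIndependent.pair_iff.1 hli _ _ hc
    intro i; fin_cases i <;> assumption
  have hmA := (hMmem m).1 hmM
  have hαmA := (hMmem _).1 hαmM
  have hAmem : ∀ y, y ∈ A ↔ ∃ a b c : F, y = (algebraMap F E a + algebraMap F E b * α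
          + algebraMap F E c * α ^ 2) * m := by
    intro y
    have hl := hli3.map' (LinearMap.mulRight F m) (LinearMap.ker_eq_bot.2 hscale)
    rw [mem_iff_of_linearIndependent A hA _ hl]
    · constructor
      · rintro ⟨c, rfl⟩
        exact ⟨c 0, c 1, c 2, by simp [Fin.sum_univ_three, Algebra.smul_def]; ring⟩
      · rintro ⟨a, b, c, rfl⟩
        exact ⟨![a, b, c], by simp [Fin.sum_univ_three, Algebra.smul_def]; ring⟩
    · intro i
      fin_cases i
      · simpa using hmA.1
      · simpa using hmA.2
      · simpa [pow_two, mul_assoc] using hαmA.2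
  refine ⟨?_, hli3, hAmem⟩
  by_contra! hdeg
  have hint : IsIntegral F α := IsIntegral.of_finite F α
  have hmon := minpoly.monic hint
  set r : F[X] := X ^ 3 %ₘ minpoly F α with hr
  have hrdeg : r.natDegree < 3 := by
    have := natDegree_modByMonic_lt (X ^ 3 : F[X]) hmon (minpoly.ne_one F α)
    rw [← hr] at this
    omega
  have hα3 : α ^ 3 = aeval α r := by
    rw [hr, aeval_modByMonic_eq_self_of_root (minpoly.aeval F α)]; simp
  rw [aeval_eq_sum_range' hrdeg] at hα3
  -- A cubic relation for `α` puts `α ^ 3 * m` in `A`, hence `α ^ 2 * m` in `M = B * m`.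
  have h2 : α * α * m ∈ M := by
    rw [hMmem]
    refine ⟨by simpa [mul_assoc] using hαmA.2, ?_⟩
    rw [hAmem]
    refine ⟨r.coeff 0, r.coeff 1, r.coeff 2, ?_⟩
    rw [show α * (α * α * m) = α ^ 3 * m by ring, hα3]
    simp [Finset.sum_range_succ, Algebra.smul_def]
  obtain ⟨b, hb, hbm⟩ := (hMB _).1 h2
  exact hsq (mul_right_cancel₀ hm0 hbm ▸ hb)
/-- The `F`-space of scalars `x` with `x • v ∈ U`. -/
def scalarsIn {F E : Type*} [Field F] [Field E] [Algebra F E] {n : ℕ}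
    (U : Submodule F (Fin n → E)) (v : Fin n → E) : Submodule F E :=
  U.comap ((LinearMap.toSpanSingleton E (Fin n → E) v).restrictScalars F)

lemma mem_scalarsIn {F E : Type*} [Field F] [Field E] [Algebra F E] {n : ℕ}
    {U : Submodule F (Fin n → E)} {v : Fin n → E} {x : E} :
    x ∈ scalarsIn U v ↔ x • v ∈ U := Iff.rfl

lemma weightOf_span_singleton {F E : Type*} [Field F] [Field E] [Algebra F E] {n : ℕ}
    (U : Submodule F (Fin n → E)) {v : Fin n → E} (hv : v ≠ 0) :
    weightOf U (Submodule.span E {v}) = Module.finrank F (scalarsIn U v) := by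
  have hinj : Function.Injective
      ((LinearMap.toSpanSingleton E (Fin n → E) v).restrictScalars F) :=
    smul_left_injective E hv
  have hmap : U ⊓ (Submodule.span E {v}).restrictScalars F
      = (scalarsIn U v).map ((LinearMap.toSpanSingleton E (Fin n → E) v).restrictScalars F) := by
    ext w
    simp only [Submodule.mem_inf, Submodule.restrictScalars_mem, Submodule.mem_span_singleton,
      Submodule.mem_map, mem_scalarsIn]
    constructor
    · rintro ⟨hw, x, rfl⟩; exact ⟨x, hw, rfl⟩
    · rintro ⟨x, hx, rfl⟩; exact ⟨hx, x, rfl⟩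
  rw [weightOf, hmap]
  exact (Submodule.equivMapOfInjective _ hinj _).finrank_eq.symm

/-- If the weights of `⟨u⟩` and `⟨v⟩` add up to the rank, then `U = B • u ⊕ A • v`. -/
lemma mem_iff_of_complementary {F E : Type*} [Field F] [Field E] [Fintype E] [Algebra F E]
    (U : Submodule F (Fin 2 → E)) {u v : Fin 2 → E} (huv : LinearIndependent E ![u, v])
    (hdim : Module.finrank F (scalarsIn U u) + Module.finrank F (scalarsIn U v)
      = Module.finrank F U) (x y : E) :
    x • u + y • v ∈ U ↔ x ∈ scalarsIn U u ∧ y ∈ scalarsIn U v := by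
  have : FiniteDimensional F E := Module.Finite.of_finite
  let f : (scalarsIn U u × scalarsIn U v) →ₗ[F] (Fin 2 → E) :=
    LinearMap.coprod
      (((LinearMap.toSpanSingleton E (Fin 2 → E) u).restrictScalars F) ∘ₗ (scalarsIn U u).subtype)
      (((LinearMap.toSpanSingleton E (Fin 2 → E) v).restrictScalars F) ∘ₗ (scalarsIn U v).subtype)
  have hf : ∀ p, f p = (p.1 : E) • u + (p.2 : E) • v := fun p => by simp [f]
  have hinj : Function.Injective f := by
    rw [← LinearMap.ker_eq_bot, LinearMap.ker_eq_bot']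
    rintro ⟨⟨a, ha⟩, ⟨b, hb⟩⟩ hab
    rw [hf] at hab
    obtain ⟨h1, h2⟩ := LinearIndependent.pair_iff.1 huv _ _ hab
    ext <;> assumption
  have hrange : LinearMap.range f = U := by
    apply Submodule.eq_of_le_of_finrank_eq
    · rintro _ ⟨p, rfl⟩
      rw [hf]
      exact U.add_mem p.1.2 p.2.2
    · rw [LinearMap.finrank_range_of_inj hinj, Module.finrank_prod, hdim]
  constructor
  · intro h
    rw [← hrange] at h
    obtain ⟨p, hp⟩ := h
    rw [hf] at hp
    obtain ⟨h1, h2⟩ := LinearIndependent.pair_iff.1 huv (p.1 - x) (p.2 - y) (by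
      rw [sub_smul, sub_smul]
      linear_combination (exp := 1) hp)
    rw [sub_eq_zero] at h1 h2
    exact ⟨h1 ▸ p.1.2, h2 ▸ p.2.2⟩
  · rintro ⟨hx, hy⟩
    exact U.add_mem hx hy

lemma span_eq_of_ne_zero {E V : Type*} [Field E] [AddCommGroup V] [Module E V] (u v : V)
    {x : E} (hx : x ≠ 0) (y : E) :
    Submodule.span E {x • u + y • v} = Submodule.span E {u + (x⁻¹ * y) • v} := by
  have : x • u + y • v = x • (u + (x⁻¹ * y) • v) := by
    rw [smul_add, smul_smul, mul_inv_cancel_left₀ hx]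
  rw [this, Submodule.span_singleton_smul_eq (IsUnit.mk0 x hx)]

lemma linearIndependent_pair_smul {E V : Type*} [Field E] [AddCommGroup V] [Module E V] {u v : V}
    (huv : LinearIndependent E ![u, v]) {m : E} (hm : m ≠ 0) :
    LinearIndependent E ![u, m • v] := by
  rw [LinearIndependent.pair_iff] at huv ⊢
  intro s t hst
  rw [smul_smul] at hst
  obtain ⟨h1, h2⟩ := huv _ _ hst
  exact ⟨h1, by simpa [hm] using h2⟩

/-- The points of weight at least two, other than `⟨v⟩`, correspond to the scalars `y` with
`B * y ⊆ A`, where `U = B • u ⊕ A • v` and `B` is a plane. -/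
lemma two_le_weightOf_iff {F E : Type*} [Field F] [Field E] [Fintype E] [Algebra F E]
    (U : Submodule F (Fin 2 → E)) {u v : Fin 2 → E} (huv : LinearIndependent E ![u, v])
    (hB : Module.finrank F (scalarsIn U u) = 2)
    (hU : ∀ x y : E, x • u + y • v ∈ U ↔ x ∈ scalarsIn U u ∧ y ∈ scalarsIn U v) (y : E) :
    weightOf U (Submodule.span E {u + y • v}) ≤ 2 ∧
    (2 ≤ weightOf U (Submodule.span E {u + y • v}) ↔
      ∀ x ∈ scalarsIn U u, x * y ∈ scalarsIn U v) := by
  have : FiniteDimensional F E := Module.Finite.of_finite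
  have hne : u + y • v ≠ 0 := by
    intro h
    have := LinearIndependent.pair_iff.1 huv 1 y (by simpa using h)
    exact one_ne_zero this.1
  rw [weightOf_span_singleton U hne]
  have hmem : ∀ x, x ∈ scalarsIn U (u + y • v) ↔ x ∈ scalarsIn U u ∧ x * y ∈ scalarsIn U v := by
    intro x
    rw [mem_scalarsIn, smul_add, smul_smul, hU]
  have hle : scalarsIn U (u + y • v) ≤ scalarsIn U u := fun x hx => ((hmem x).1 hx).1
  refine ⟨(Submodule.finrank_mono hle).trans hB.le, ?_, ?_⟩
  · intro h x hx
    have heq : scalarsIn U (u + y • v) = scalarsIn U u :=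
      Submodule.eq_of_le_of_finrank_le hle (by rw [hB]; exact h)
    rw [← heq] at hx
    exact ((hmem x).1 hx).2
  · intro h
    exact hB.ge.trans (Submodule.finrank_mono fun x hx => (hmem x).2 ⟨hx, h x hx⟩)

/-- A plane `B` that is closed under multiplication is a subfield `F_{q²}`, and then the points
`⟨v⟩` and `⟨u + b m v⟩`, `b ∈ B`, form an `F_{q²}`-subline, namely that of `B u + B m v`. -/
lemma exists_subline {F E : Type*} [Field F] [Fintype F] [Field E] [Fintype E] [Algebra F E]
    (B : Submodule F E) (hB : Module.finrank F B = 2) (h1 : (1 : E) ∈ B)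
    (hmul : ∀ x ∈ B, ∀ y ∈ B, x * y ∈ B) {u v : Fin 2 → E}
    (huv : LinearIndependent E ![u, v]) {m : E} (hm : m ≠ 0) :
    ∃ K : Subfield E, Nat.card K = Fintype.card F ^ 2 ∧
      ∃ W : Submodule K (Fin 2 → E), Module.finrank K W = 2 ∧
        {P : Submodule E (Fin 2 → E) | ∃ w ∈ W, w ≠ 0 ∧ P = Submodule.span E {w}}
          = {P | P = Submodule.span E {v} ∨
              ∃ b ∈ B, P = Submodule.span E {u + (b * m) • v}} := by
  have hpow : ∀ x ∈ B, ∀ n : ℕ, x ^ n ∈ B := by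
    intro x hx n
    induction n with
    | zero => simpa using h1
    | succ n ih => rw [pow_succ]; exact hmul _ ih _ hx
  let K : Subfield E :=
    { carrier := B
      mul_mem' := fun {x y} hx hy => hmul x hx y hy
      one_mem' := h1
      add_mem' := fun {x y} hx hy => B.add_mem hx hy
      zero_mem' := B.zero_mem
      neg_mem' := fun {x} hx => B.neg_mem hx
      -- In a finite field the inverse of a nonzero element is one of its powers.
      inv_mem' := fun x hx => by
        by_cases h0 : x = 0
        · rw [h0, inv_zero]; exact B.zero_mem
        · have : x⁻¹ = x ^ (Fintype.card E - 2) := by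
            have hc := Fintype.one_lt_card (α := E)
            apply inv_eq_of_mul_eq_one_left
            rw [← pow_succ, show Fintype.card E - 2 + 1 = Fintype.card E - 1 by omega]
            exact FiniteField.pow_card_sub_one_eq_one x h0
          rw [this]
          exact hpow x hx _ }
  have hK : ∀ x, x ∈ K ↔ x ∈ B := fun x => Iff.rfl
  have hli : LinearIndependent E ![u, m • v] := linearIndependent_pair_smul huv hm
  have hliK : LinearIndependent K ![u, m • v] :=
    hli.restrict_scalars' K
  refine ⟨K, ?_, Submodule.span K (Set.range ![u, m • v]), ?_, ?_⟩
  · have hc := Module.natCard_eq_pow_finrank (K := F) (V := B)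
    rw [hB, Nat.card_eq_fintype_card (α := F)] at hc
    exact hc
  · rw [finrank_span_eq_card hliK, Fintype.card_fin]
  ext P
  simp only [Set.mem_ofPred_eq, Submodule.mem_span_range_iff_exists_fun, Fin.sum_univ_two,
    Matrix.cons_val_zero, Matrix.cons_val_one]
  have hsv : Submodule.span E {m • v} = Submodule.span E {v} :=
    Submodule.span_singleton_smul_eq (IsUnit.mk0 m hm) v
  constructor
  · rintro ⟨_, ⟨c, rfl⟩, hw, rfl⟩
    by_cases h0 : c 0 = 0
    · left
      have h10 : (c 1 : E) ≠ 0 := by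
        intro h; apply hw; rw [h0, show c 1 = 0 from Subtype.ext h]; simp
      rw [h0, zero_smul, zero_add, ← hsv]
      exact Submodule.span_singleton_smul_eq (IsUnit.mk0 _ h10) (m • v)
    · right
      have h00 : (c 0 : E) ≠ 0 := fun h => h0 (Subtype.ext h)
      refine ⟨_, (hK _).1 ((c 0)⁻¹ * c 1).2, ?_⟩
      have := span_eq_of_ne_zero u (m • v) h00 (c 1 : E)
      rw [smul_smul ((c 0 : E)⁻¹ * _)] at this
      exact this
  · rintro (rfl | ⟨b, hb, rfl⟩)
    · refine ⟨m • v, ⟨![0, 1], by simp⟩, hli.ne_zero 1, hsv.symm⟩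
    · refine ⟨u + (b * m) • v, ⟨![1, ⟨b, hb⟩], ?_⟩, ?_, rfl⟩
      · simp only [Matrix.cons_val_zero, Matrix.cons_val_one, one_smul, mul_smul]
        rfl
      · intro h
        exact one_ne_zero (LinearIndependent.pair_iff.1 huv 1 (b * m) (by simpa using h)).1
/-- Proposition 2.11 of the paper. A rank-5 linear set of size `q^4 + 1`
with one point of weight 3 and `q^2` points of weight 2, whose points of weight at least 2
do not form an `F_{q^2}`-subline, is `PΓL(2,q^h)`-equivalent to the linear set
`{⟨(μ1 + μ2 α, μ3 + μ4 α + μ5 α^2)⟩}` for some `α` with `[F_q(α):F_q] ≥ 4`. -/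
theorem stmt15 (q h : ℕ) (F E : Type*) [Field F] [Fintype F] [Field E] [Fintype E]
    [Algebra F E] (hq : Fintype.card F = q) (hE : Fintype.card E = q ^ h)
    (U : Submodule F (Fin 2 → E)) (hU : Module.finrank F U = 5)
    (hL : (linearSet U).ncard = q ^ 4 + 1)
    (hw3 : {W ∈ linearSet U | weightOf U W = 3}.ncard = 1)
    (hw2 : {W ∈ linearSet U | weightOf U W = 2}.ncard = q ^ 2)
    (hsub : ¬ ∃ K : Subfield E, Nat.card K = q ^ 2 ∧
      ∃ W : Submodule K (Fin 2 → E), Module.finrank K W = 2 ∧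
        {P : Submodule E (Fin 2 → E) | ∃ w ∈ W, w ≠ 0 ∧ P = Submodule.span E {w}}
          = {P ∈ linearSet U | 2 ≤ weightOf U P}) :
    ∃ α : E, 4 ≤ (minpoly F α).natDegree ∧
    ∃ (σ : E ≃+* E) (g : (Fin 2 → E) → (Fin 2 → E)),
      Function.Bijective g ∧
      (∀ x y, g (x + y) = g x + g y) ∧
      (∀ (c : E) (x), g (c • x) = σ c • g x) ∧
      {W' : Submodule E (Fin 2 → E) | ∃ W ∈ linearSet U,
          (W' : Set (Fin 2 → E)) = g '' (W : Set (Fin 2 → E))}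
        = {W : Submodule E (Fin 2 → E) | ∃ μ : Fin 5 → F, μ ≠ 0 ∧
            W = Submodule.span E
              {![algebraMap F E (μ 0) + algebraMap F E (μ 1) * α,
                 algebraMap F E (μ 2) + algebraMap F E (μ 3) * α
                   + algebraMap F E (μ 4) * α ^ 2]}} := by
  have : FiniteDimensional F E := Module.Finite.of_finite
  have : Finite (Submodule E (Fin 2 → E)) := inferInstance
  have hq1 : 1 < q := hq ▸ Fintype.one_lt_card
  obtain ⟨P₃, hP₃⟩ := Set.ncard_eq_one.1 hw3
  obtain ⟨⟨v, hvU, hv0, rfl⟩, hv3⟩ : P₃ ∈ {W ∈ linearSet U | weightOf U W = 3} := by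
    rw [hP₃]; rfl
  obtain ⟨P₂, ⟨u, huU, hu0, rfl⟩, hu2⟩ : {W ∈ linearSet U | weightOf U W = 2}.Nonempty := by
    apply Set.nonempty_of_ncard_ne_zero
    rw [hw2]; positivity
  have huv : LinearIndependent E ![u, v] := by
    rw [LinearIndependent.pair_iff' hu0]
    intro a ha
    have ha0 : a ≠ 0 := by rintro rfl; exact hv0 (by simpa using ha.symm)
    rw [← ha, Submodule.span_singleton_smul_eq (IsUnit.mk0 a ha0), hu2] at hv3
    omega
  have hB := (weightOf_span_singleton U hu0).symm.trans hu2
  have hA := (weightOf_span_singleton U hv0).symm.trans hv3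
  have hdec := mem_iff_of_complementary U huv (by rw [hA, hB, hU])
  have hwt := two_le_weightOf_iff U huv hB hdec
  set B := scalarsIn U u with hBdef
  set A := scalarsIn U v with hAdef
  have h1B : (1 : E) ∈ B := by rw [hBdef, mem_scalarsIn, one_smul]; exact huU
  have hcoord : ∀ w : Fin 2 → E, ∃ x y : E, w = x • u + y • v := by
    intro w
    have := (mem_iff_of_linearIndependent (⊤ : Submodule E (Fin 2 → E)) (by simp) _ huv
      (by simp) w).1 trivial
    obtain ⟨c, hc⟩ := this
    exact ⟨c 0, c 1, by simpa using hc.symm⟩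
  -- The multipliers of `B` into `A`; they parametrize the points of weight 2.
  let M : Submodule F E :=
    { carrier := {y | ∀ x ∈ B, x * y ∈ A}
      add_mem' := fun {a b} ha hb x hx => by rw [mul_add]; exact A.add_mem (ha x hx) (hb x hx)
      zero_mem' := fun x _ => by rw [mul_zero]; exact A.zero_mem
      smul_mem' := fun c y hy x hx => by rw [mul_smul_comm]; exact A.smul_mem c (hy x hx) }
  have hM : ∀ y, y ∈ M ↔ ∀ x ∈ B, x * y ∈ A := fun y => Iff.rfl
  have hMpt : ∀ y ∈ M, Submodule.span E {u + y • v} ∈ linearSet U := by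
    intro y hy
    refine ⟨u + y • v, ?_, ?_, rfl⟩
    · have := (hdec 1 y).2 ⟨h1B, by simpa using hy 1 h1B⟩
      simpa using this
    · intro h
      exact one_ne_zero (LinearIndependent.pair_iff.1 huv 1 y (by simpa using h)).1
  have hclass : ∀ P ∈ linearSet U, 2 ≤ weightOf U P →
      P = Submodule.span E {v} ∨ ∃ y ∈ M, P = Submodule.span E {u + y • v} := by
    rintro _ ⟨w, hw, hw0, rfl⟩ h2
    obtain ⟨x, y, rfl⟩ := hcoord w
    by_cases hx : x = 0
    · left
      subst hx
      rw [zero_smul, zero_add] at hw0 ⊢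
      exact Submodule.span_singleton_smul_eq (IsUnit.mk0 y (fun h => hw0 (by simp [h]))) v
    · right
      rw [span_eq_of_ne_zero u v hx] at h2 ⊢
      exact ⟨_, (hwt _).2.1 h2, rfl⟩
  have hMcard : Nat.card M = q ^ 2 := by
    rw [← hw2]
    have himg : {W ∈ linearSet U | weightOf U W = 2}
        = (fun y : E => Submodule.span E {u + y • v}) '' (M : Set E) := by
      ext P
      constructor
      · rintro ⟨hP, hP2⟩
        rcases hclass P hP hP2.ge with rfl | ⟨y, hy, rfl⟩
        · omega
        · exact ⟨y, hy, rfl⟩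
      · rintro ⟨y, hy, rfl⟩
        exact ⟨hMpt y hy, le_antisymm (hwt y).1 ((hwt y).2.2 hy)⟩
    have hinj : Function.Injective (fun y : E => Submodule.span E {u + y • v}) := by
      intro y z hyz
      have hmem : u + y • v ∈ Submodule.span E {u + z • v} := by
        rw [← show _ = Submodule.span E {u + z • v} from hyz]
        exact Submodule.mem_span_singleton_self _
      obtain ⟨c, hc⟩ := Submodule.mem_span_singleton.1 hmem
      obtain ⟨h1, h2⟩ := LinearIndependent.pair_iff.1 huv (c - 1) (c * z - y) (by
        rw [sub_smul, sub_smul, one_smul, mul_smul]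
        rw [smul_add] at hc
        linear_combination (exp := 1) hc)
      rw [sub_eq_zero] at h1 h2
      rw [← h2, h1, one_mul]
    rw [himg, Set.ncard_image_of_injective _ hinj]
    rfl
  have hM2 : Module.finrank F M = 2 := by
    have := Module.natCard_eq_pow_finrank (K := F) (V := M)
    rw [hMcard, Nat.card_eq_fintype_card, hq] at this
    exact (Nat.pow_right_injective hq1 this).symm
  obtain ⟨α, m, hm, hli, hBmem, ⟨hsq, hMB⟩ | ⟨hdeg, hli3, hAmem⟩⟩ :=
    exists_common_multiplier A B M hA hB h1B hM hM2
  · exfalso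
    apply hsub
    have hmul : ∀ x ∈ B, ∀ y ∈ B, x * y ∈ B := by
      intro x hx y hy
      obtain ⟨a, b, rfl⟩ := (hBmem x).1 hx
      obtain ⟨c, d, rfl⟩ := (hBmem y).1 hy
      have hαB : α ∈ B := (hBmem α).2 ⟨0, 1, by simp⟩
      have := B.add_mem (B.add_mem (B.smul_mem (a * c) h1B) (B.smul_mem (a * d + b * c) hαB))
        (B.smul_mem (b * d) hsq)
      convert this using 1
      simp only [Algebra.smul_def, map_mul, map_add]
      ring
    obtain ⟨K, hKc, W, hW, hset⟩ := exists_subline B hB h1B hmul huv hm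
    refine ⟨K, hq ▸ hKc, W, hW, hset.trans ?_⟩
    ext P
    constructor
    · rintro (rfl | ⟨b, hb, rfl⟩)
      · exact ⟨⟨v, hvU, hv0, rfl⟩, by omega⟩
      · have hy : b * m ∈ M := (hMB _).2 ⟨b, hb, rfl⟩
        exact ⟨hMpt _ hy, (hwt _).2.2 hy⟩
    · rintro ⟨hP, hP2⟩
      rcases hclass P hP hP2 with rfl | ⟨y, hy, rfl⟩
      · exact Or.inl rfl
      · obtain ⟨b, hb, rfl⟩ := (hMB _).1 hy
        exact Or.inr ⟨b, hb, rfl⟩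
  · have huv' : LinearIndependent E ![u, m • v] := linearIndependent_pair_smul huv hm
    let e := (basisOfLinearIndependentOfCardEqFinrank huv' (by simp)).equivFun
    have he : ∀ x y : E, e (x • u + y • m • v) = ![x, y] := by
      intro x y
      rw [← LinearEquiv.eq_symm_apply]
      simp [e, Module.Basis.equivFun_symm_apply]
    refine ⟨α, hdeg, RingEquiv.refl E, e, e.bijective, map_add e, fun c x => map_smul e c x, ?_⟩
    have hspan : ∀ w : Fin 2 → E, e '' (Submodule.span E {w} : Set (Fin 2 → E))
        = (Submodule.span E {e w} : Set (Fin 2 → E)) := by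
      intro w
      have := Submodule.map_span (e : (Fin 2 → E) →ₗ[E] (Fin 2 → E)) {w}
      rw [Set.image_singleton] at this
      exact congrArg (fun S : Submodule E (Fin 2 → E) => (S : Set (Fin 2 → E))) this
    ext P
    constructor
    · rintro ⟨_, ⟨w, hw, hw0, rfl⟩, hP⟩
      obtain ⟨x, y, rfl⟩ := hcoord w
      obtain ⟨hx, hy⟩ := (hdec x y).1 hw
      obtain ⟨a, b, rfl⟩ := (hBmem x).1 hx
      obtain ⟨c, d, f, rfl⟩ := (hAmem y).1 hy
      refine ⟨![a, b, c, d, f], ?_, ?_⟩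
      · intro h
        apply hw0
        have h0 := congrFun h 0
        have h1 := congrFun h 1
        have h2 := congrFun h 2
        have h3 := congrFun h 3
        have h4 := congrFun h 4
        simp at h0 h1 h2 h3 h4
        simp [h0, h1, h2, h3, h4]
      · rw [hspan, mul_smul, he] at hP
        exact SetLike.coe_injective hP
    · rintro ⟨μ, hμ, rfl⟩
      refine ⟨_, ⟨(algebraMap F E (μ 0) + algebraMap F E (μ 1) * α) • u +
        ((algebraMap F E (μ 2) + algebraMap F E (μ 3) * α + algebraMap F E (μ 4) * α ^ 2) * m) • v,
        (hdec _ _).2 ⟨(hBmem _).2 ⟨_, _, rfl⟩, (hAmem _).2 ⟨_, _, _, rfl⟩⟩, ?_, rfl⟩, ?_⟩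
      · intro h
        apply hμ
        rw [mul_smul] at h
        obtain ⟨h1, h2⟩ := LinearIndependent.pair_iff.1 huv' _ _ h
        obtain ⟨k0, k1⟩ := LinearIndependent.pair_iff.1 hli (μ 0) (μ 1)
          (by simpa [Algebra.smul_def] using h1)
        have k := Fintype.linearIndependent_iff.1 hli3 ![μ 2, μ 3, μ 4]
          (by simpa [Fin.sum_univ_three, Algebra.smul_def] using h2)
        have k2 := k 0
        have k3 := k 1
        have k4 := k 2
        simp at k2 k3 k4
        ext i
        fin_cases i <;> assumption
      · rw [hspan, mul_smul, he]
end

section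
/- Let p be a prime and F_{p^6} the field with p^6 elements. Let α, β ∈ F_{p^6} with [F_p(α):F_p] = 2 and [F_p(β):F_p] ∈ {3, 6}. Define L1 = {⟨(μ1, μ2 + μ3·α)⟩ : μ1, μ2, μ3 ∈ F_p, (μ1,μ2,μ3) ≠ (0,0,0)} and L2 = {⟨(ν1, ν2 + ν3·β)⟩ : ν1, ν2, ν3 ∈ F_p, (ν1,ν2,ν3) ≠ (0,0,0)}, both subsets of PG(1,p^6). Then there is no field automorphism σ of F_{p^6} and no σ-semilinear bijection g of (F_{p^6})² whose induced map on PG(1,p^6) sends L1 onto L2. -/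
open Polynomial

/-!
The linear set `L1` is a subline `PG(1, p^2)`: every point of it is spanned by a vector
with both coordinates in `K = F(α)`, so the cross ratio of any four of its points lies in `K ∪ {∞}`.
A semilinear map transforms cross ratios by `σ`. The linear set `L2` contains the points
`(0,1), (1,0), (1,1), (1,β)`, whose cross ratio is `β`, so an equivalence would give `β ∈ σ(K)`
(`cross_ratio_mem`). Since `F` is a prime field, `σ` fixes it, hence every element of `σ(K)` has degree
at most `2` over `F` (`natDegree_minpoly_le_two`), whereas `β` has degree `3` or `6`.
-/

/-- If a semilinear map sends four vectors with coordinates in a subfield `K` to multiples of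
`(0,1), (1,0), (1,1), (1,β)`, then `β`, the cross ratio of the image points, lies in `σ(K)`. -/
lemma cross_ratio_mem {F E : Type*} [Field F] [Field E] [Algebra F E]
    (K : IntermediateField F E) (β : E) (σ : E ≃+* E) (g : (Fin 2 → E) → (Fin 2 → E))
    (hadd : ∀ x y, g (x + y) = g x + g y) (hsmul : ∀ (c : E) (x), g (c • x) = σ c • g x)
    (h : ∀ v ∈ ({![0, 1], ![1, 0], ![1, 1], ![1, β]} : Set (Fin 2 → E)),
      ∃ x ∈ K, ∃ y ∈ K, ∃ c : E, c ≠ 0 ∧ g ![x, y] = c • v) :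
    ∃ k ∈ K, σ k = β := by
  obtain ⟨x1, hx1, y1, hy1, c1, hc1, e1⟩ := h ![0, 1] (by simp)
  obtain ⟨x2, hx2, y2, hy2, c2, hc2, e2⟩ := h ![1, 0] (by simp)
  obtain ⟨x3, hx3, y3, hy3, c3, hc3, e3⟩ := h ![1, 1] (by simp)
  obtain ⟨x4, hx4, y4, hy4, c4, hc4, e4⟩ := h ![1, β] (by simp)
  have g0 : g 0 = 0 := by simpa using hsmul 0 0
  have comb : ∀ a b : E, g (a • ![x1, y1] + b • ![x2, y2]) = ![σ b * c2, σ a * c1] := by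
    intro a b
    rw [hadd, hsmul, hsmul, e1, e2]
    ext i; fin_cases i <;> simp
  have hd : x1 * y2 - x2 * y1 ≠ 0 := by
    intro hd
    -- A vanishing determinant gives two linear relations between the first two vectors.
    have r1 := comb (-x2) x1
    have r2 := comb (-y2) y1
    have z1 : (-x2) • ![x1, y1] + x1 • ![x2, y2] = 0 := by
      ext i; fin_cases i
      · simp; ring
      · simp; linear_combination hd
    have z2 : (-y2) • ![x1, y1] + y1 • ![x2, y2] = 0 := by
      ext i; fin_cases i
      · simp; linear_combination -hd
      · simp; ring
    rw [z1, g0] at r1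
    rw [z2, g0] at r2
    have q1 : x1 = 0 := by simpa [hc2] using congrFun r1 0
    have q2 : y1 = 0 := by simpa [hc2] using congrFun r2 0
    have z : (![x1, y1] : Fin 2 → E) = 0 := by simp [q1, q2]
    rw [z, g0] at e1
    exact hc1 (by simpa using (congrFun e1 1).symm)
  have hσd : σ (x1 * y2 - x2 * y1) ≠ 0 :=
    (map_ne_zero σ).mpr hd
  -- Cramer's rule expresses every vector in terms of the first two, with coefficients in `K`.
  have cramer : ∀ x y : E, (x1 * y2 - x2 * y1) • ![x, y]
      = (x * y2 - x2 * y) • ![x1, y1] + (x1 * y - x * y1) • ![x2, y2] := by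
    intro x y
    ext i; fin_cases i <;> simp <;> ring
  have r3 := comb (x3 * y2 - x2 * y3) (x1 * y3 - x3 * y1)
  have r4 := comb (x4 * y2 - x2 * y4) (x1 * y4 - x4 * y1)
  rw [← cramer, hsmul, e3] at r3
  rw [← cramer, hsmul, e4] at r4
  generalize hD : x1 * y2 - x2 * y1 = D at *
  have ha : x3 * y2 - x2 * y3 ∈ K := sub_mem (mul_mem hx3 hy2) (mul_mem hx2 hy3)
  have hb : x1 * y3 - x3 * y1 ∈ K := sub_mem (mul_mem hx1 hy3) (mul_mem hx3 hy1)
  have hc : x4 * y2 - x2 * y4 ∈ K := sub_mem (mul_mem hx4 hy2) (mul_mem hx2 hy4)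
  have hd' : x1 * y4 - x4 * y1 ∈ K := sub_mem (mul_mem hx1 hy4) (mul_mem hx4 hy1)
  generalize x3 * y2 - x2 * y3 = a at *
  generalize x1 * y3 - x3 * y1 = b at *
  generalize x4 * y2 - x2 * y4 = c at *
  generalize x1 * y4 - x4 * y1 = d at *
  have s1 : σ D * c3 = σ b * c2 := by simpa using congrFun r3 0
  have s2 : σ D * c3 = σ a * c1 := by simpa using congrFun r3 1
  have s3 : σ D * c4 = σ d * c2 := by simpa using congrFun r4 0
  have s4 : σ D * (c4 * β) = σ c * c1 := by simpa using congrFun r4 1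
  have na : σ a ≠ 0 := by
    intro q
    rw [q, zero_mul] at s2
    exact mul_ne_zero hσd hc3 s2
  have nd : σ d ≠ 0 := by
    intro q
    rw [q, zero_mul] at s3
    exact mul_ne_zero hσd hc4 s3
  refine ⟨c * b / (d * a), div_mem (mul_mem hc hb) (mul_mem hd' ha), ?_⟩
  rw [map_div₀, map_mul, map_mul, div_eq_iff (mul_ne_zero nd na)]
  apply mul_right_cancel₀ hc2
  linear_combination -(σ c) * s1 + σ c * s2 - σ a * s4 + β * σ a * s3

/-- Automorphisms of `E` fix the prime field `F`, so they do not increase the degree over `F` of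
elements of the quadratic field `F(α)`. -/
lemma natDegree_minpoly_le_two {p : ℕ} (hp : p.Prime) {F E : Type*} [Field F] [Fintype F] [Field E]
    [Fintype E] [Algebra F E] (hF : Fintype.card F = p) (α k : E)
    (hα : (minpoly F α).natDegree = 2) (hk : k ∈ IntermediateField.adjoin F {α}) (σ : E ≃+* E) :
    (minpoly F (σ k)).natDegree ≤ 2 := by
  have : Fact p.Prime := ⟨hp⟩
  let e : ZMod p ≃+* F := ZMod.ringEquivOfPrime F hp hF
  have hσ : ∀ r : F, σ (algebraMap F E r) = algebraMap F E r := by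
    intro r
    have := RingHom.congr_fun (Subsingleton.elim
      (((σ : E →+* E).comp (algebraMap F E)).comp (e : ZMod p →+* F))
      ((algebraMap F E).comp (e : ZMod p →+* F))) (e.symm r)
    simpa using this
  let τ : E ≃ₐ[F] E := AlgEquiv.ofRingEquiv (f := σ) hσ
  have h1 : minpoly F (σ k) = minpoly F k := minpoly.algEquiv_eq τ k
  have hf : FiniteDimensional F E := Module.Finite.of_finite
  rw [h1, ← IntermediateField.adjoin.finrank (Algebra.IsIntegral.isIntegral k), ← hα,
    ← IntermediateField.adjoin.finrank (Algebra.IsIntegral.isIntegral α)]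
  exact IntermediateField.finrank_le_of_le_right
    (IntermediateField.adjoin_simple_le_iff.mpr hk)

/-- Subsection 2.2.2 of the paper. In `PG(1, p^6)`, the linear sets
`L1 = {⟨(μ1, μ2 + μ3 α)⟩}` and `L2 = {⟨(ν1, ν2 + ν3 β)⟩}`, where `[F_p(α):F_p] = 2` and
`[F_p(β):F_p] ∈ {3, 6}`, are not `PΓL(2, p^6)`-equivalent: no semilinear bijection of
`(F_{p^6})²` induces a projective map sending `L1` onto `L2`. Points of `PG(1, p^6)` are
modelled as `1`-dimensional subspaces `span E {v}`, `v ≠ 0`. -/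
theorem stmt16 (p : ℕ) (hp : p.Prime) (F E : Type*) [Field F] [Fintype F] [Field E]
    [Fintype E] [Algebra F E] (hF : Fintype.card F = p) (hE : Fintype.card E = p ^ 6)
    (α β : E) (hα : (minpoly F α).natDegree = 2)
    (hβ : (minpoly F β).natDegree = 3 ∨ (minpoly F β).natDegree = 6) :
    ¬ ∃ (σ : E ≃+* E) (g : (Fin 2 → E) → (Fin 2 → E)),
        Function.Bijective g ∧
        (∀ x y, g (x + y) = g x + g y) ∧
        (∀ (c : E) (x), g (c • x) = σ c • g x) ∧
        {W' : Submodule E (Fin 2 → E) | ∃ W ∈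
            {W : Submodule E (Fin 2 → E) | ∃ μ1 μ2 μ3 : F, ¬(μ1 = 0 ∧ μ2 = 0 ∧ μ3 = 0) ∧
              W = Submodule.span E
                {![algebraMap F E μ1, algebraMap F E μ2 + algebraMap F E μ3 * α]}},
            (W' : Set (Fin 2 → E)) = g '' (W : Set (Fin 2 → E))}
          = {W : Submodule E (Fin 2 → E) | ∃ ν1 ν2 ν3 : F, ¬(ν1 = 0 ∧ ν2 = 0 ∧ ν3 = 0) ∧
              W = Submodule.span E
                {![algebraMap F E ν1, algebraMap F E ν2 + algebraMap F E ν3 * β]}} := by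
  rintro ⟨σ, g, -, hadd, hsmul, hL⟩
  obtain ⟨k, hk, rfl⟩ := cross_ratio_mem (IntermediateField.adjoin F {α}) β σ g hadd hsmul (by
    intro v hv
    have hv0 : v ≠ 0 := by
      rcases hv with rfl | rfl | rfl | rfl <;> simp
    have hmem : Submodule.span E {v} ∈ {W : Submodule E (Fin 2 → E) |
        ∃ ν1 ν2 ν3 : F, ¬(ν1 = 0 ∧ ν2 = 0 ∧ ν3 = 0) ∧ W = Submodule.span E
          {![algebraMap F E ν1, algebraMap F E ν2 + algebraMap F E ν3 * β]}} := by
      rcases hv with rfl | rfl | rfl | rfl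
      · exact ⟨0, 1, 0, by simp, by simp⟩
      · exact ⟨1, 0, 0, by simp, by simp⟩
      · exact ⟨1, 1, 0, by simp, by simp⟩
      · exact ⟨1, 0, 1, by simp, by simp⟩
    rw [← hL] at hmem
    obtain ⟨W, ⟨μ1, μ2, μ3, -, rfl⟩, hW⟩ := hmem
    have hvW : v ∈ (Submodule.span E {v} : Set (Fin 2 → E)) :=
      Submodule.mem_span_singleton_self v
    rw [hW] at hvW
    obtain ⟨u, hu, huv⟩ := hvW
    obtain ⟨e, rfl⟩ := Submodule.mem_span_singleton.mp hu
    rw [hsmul] at huv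
    have he : σ e ≠ 0 := by
      intro q
      rw [q, zero_smul] at huv
      exact hv0 huv.symm
    refine ⟨_, algebraMap_mem _ μ1, _, add_mem (algebraMap_mem _ μ2) (mul_mem (algebraMap_mem _ μ3)
      (IntermediateField.mem_adjoin_simple_self F α)), (σ e)⁻¹, inv_ne_zero he, ?_⟩
    rw [← huv, inv_smul_smul₀ he])
  have := natDegree_minpoly_le_two hp hF α k hα hk σ
  omega
end

section
/- Let F_q be the finite field with q elements and let α ∈ F_{q^4} with [F_q(α):F_q] = 4. Let U = {(λ1 + λ2·α + λ3·α², λ4 + λ1·α + λ5·α²) : λ1, …, λ5 ∈ F_q}, an F_q-subspace of (F_{q^4})² of dimension 5, and let L = L_U = {⟨u⟩ : u ∈ U \ {0}}. Then no point of L has weight greater than 2 with respect to U, and L contains exactly q² + q + 1 points of weight 2 (all remaining points having weight 1). -/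
/-!
Every point `W` of the projective line has weight at least `5 + 4 - 8 = 1` by Grassmann's formula,
and at most 2 by `weight_le_two`: three independent vectors of `U` on one point would have the
form `(1, x + α + y α²)`, `(α, x' + y' α²)`, `(α², x'' + y'' α²)`, and proportionality contradicts
the independence of `1, α, α², α³`.  So if `N₁`, `N₂` count the points of weight 1 and 2, then

* `N₁ + N₂ = q⁴ + 1`, the number of all points of the line;
* `N₁ (q - 1) + N₂ (q² - 1) = q⁵ - 1`, counting the nonzero vectors of `U` by the point they span,

and these two equations give `N₂ = q² + q + 1`. Both counts are instances of
`sum_points_card`, applied to the whole space and to `U`.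
-/

open Polynomial

/-- `1, α, α², α³` are linearly independent over `F`, in coordinates. -/
lemma coeffs_eq_zero {F E : Type*} [Field F] [Field E] [Algebra F E] {α : E}
    (hα : (minpoly F α).natDegree = 4) {a b c d : F}
    (h : algebraMap F E a + algebraMap F E b * α + algebraMap F E c * α ^ 2
      + algebraMap F E d * α ^ 3 = 0) : a = 0 ∧ b = 0 ∧ c = 0 ∧ d = 0 := by
  have hli := linearIndependent_pow (K := F) α
  rw [hα, Fintype.linearIndependent_iff] at hli
  have := hli ![a, b, c, d] (by
    simp only [Fin.sum_univ_four, Algebra.smul_def]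
    simpa using h)
  exact ⟨this 0, this 1, this 2, this 3⟩

/-- The coordinate map `λ ↦ (λ₁ + λ₂ α + λ₃ α², λ₄ + λ₁ α + λ₅ α²)`, whose range is the
subspace `U` of the theorem. -/
noncomputable def paramMap (F : Type*) {E : Type*} [Field F] [Field E] [Algebra F E] (α : E) :
    (Fin 5 → F) →ₗ[F] (Fin 2 → E) where
  toFun lam := ![algebraMap F E (lam 0) + algebraMap F E (lam 1) * α
              + algebraMap F E (lam 2) * α ^ 2,
            algebraMap F E (lam 3) + algebraMap F E (lam 0) * α
              + algebraMap F E (lam 4) * α ^ 2]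
  map_add' x y := by
    ext i; fin_cases i <;> simp <;> ring
  map_smul' r x := by
    ext i; fin_cases i <;> simp [Algebra.smul_def] <;> ring

lemma paramMap_injective {F E : Type*} [Field F] [Field E] [Algebra F E] {α : E}
    (hα : (minpoly F α).natDegree = 4) : Function.Injective (paramMap F α) := by
  rw [← LinearMap.ker_eq_bot, LinearMap.ker_eq_bot']
  intro l hl
  have h0 := congrFun hl 0
  have h1 := congrFun hl 1
  simp only [paramMap, LinearMap.coe_mk, AddHom.coe_mk, Matrix.cons_val_zero, Matrix.cons_val_one,
    Pi.zero_apply] at h0 h1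
  obtain ⟨a0, a1, a2, -⟩ := coeffs_eq_zero hα (d := 0) (by simpa using h0)
  obtain ⟨a3, -, a4, -⟩ := coeffs_eq_zero hα (d := 0) (by simpa using h1)
  ext i; fin_cases i <;> simpa

/-- The weight bound, for the preimage of a point in coordinates. -/
lemma weight_le_two {F E : Type*} [Field F] [Field E] [Algebra F E] {α : E}
    (hα : (minpoly F α).natDegree = 4) (u : Fin 2 → E) :
    Module.finrank F ((Submodule.restrictScalars F (Submodule.span E {u})).comap
      (paramMap F α)) ≤ 2 := by
  set K := (Submodule.restrictScalars F (Submodule.span E {u})).comap (paramMap F α) with hK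
  have mem : ∀ l ∈ K, ∃ c : E, c * u 0 = algebraMap F E (l 0) + algebraMap F E (l 1) * α
      + algebraMap F E (l 2) * α ^ 2 ∧ c * u 1 = algebraMap F E (l 3) + algebraMap F E (l 0) * α
      + algebraMap F E (l 4) * α ^ 2 := by
    intro l hl
    obtain ⟨c, hc⟩ := Submodule.mem_span_singleton.1 (show paramMap F α l ∈ Submodule.span E {u}
      from hl)
    exact ⟨c, by simpa [paramMap] using congrFun hc 0, by simpa [paramMap] using congrFun hc 1⟩
  by_cases hu : u 0 = 0
  · -- on the point `⟨(0, 1)⟩` the coordinates `λ₄, λ₅` determine a vector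
    let p : K →ₗ[F] (Fin 2 → F) := (LinearMap.funLeft F F ![(3 : Fin 5), 4]).comp K.subtype
    have hp : Function.Injective p := by
      rw [← LinearMap.ker_eq_bot, LinearMap.ker_eq_bot']
      rintro ⟨l, hl⟩ h
      obtain ⟨c, h0, -⟩ := mem l hl
      obtain ⟨a0, a1, a2, -⟩ := coeffs_eq_zero hα (d := 0) (a := l 0) (b := l 1) (c := l 2)
        (by rw [← h0, hu]; simp)
      have a3 : l 3 = 0 := congrFun h 0
      have a4 : l 4 = 0 := congrFun h 1
      ext i; fin_cases i <;> simpa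
    simpa using LinearMap.finrank_le_finrank_of_injective hp
  · -- elsewhere the first component does, so weight 3 would realize `1, α, α²` there
    let p : K →ₗ[F] (Fin 3 → F) := (LinearMap.funLeft F F ![(0 : Fin 5), 1, 2]).comp K.subtype
    have hp : Function.Injective p := by
      rw [← LinearMap.ker_eq_bot, LinearMap.ker_eq_bot']
      rintro ⟨l, hl⟩ h
      obtain ⟨c, h0, h1⟩ := mem l hl
      have a0 : l 0 = 0 := congrFun h 0
      have a1 : l 1 = 0 := congrFun h 1
      have a2 : l 2 = 0 := congrFun h 2
      have hc : c = 0 := by simpa [a0, a1, a2, hu] using h0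
      obtain ⟨a3, -, a4, -⟩ := coeffs_eq_zero hα (d := 0) (a := l 3) (b := l 0) (c := l 4)
        (by rw [← h1, hc]; simp)
      ext i; fin_cases i <;> simpa
    have h3 : Module.finrank F K ≤ 3 := by
      simpa using LinearMap.finrank_le_finrank_of_injective hp
    by_contra hlt
    have heq : Module.finrank F K = Module.finrank F (Fin 3 → F) := by
      simp; omega
    have hs := (LinearMap.injective_iff_surjective_of_finrank_eq_finrank heq).1 hp
    obtain ⟨⟨l, hl⟩, el⟩ := hs ![1, 0, 0]
    obtain ⟨⟨m, hm⟩, em⟩ := hs ![0, 1, 0]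
    obtain ⟨⟨n, hn⟩, en⟩ := hs ![0, 0, 1]
    have l0 : l 0 = 1 := congrFun el 0
    have l1 : l 1 = 0 := congrFun el 1
    have l2 : l 2 = 0 := congrFun el 2
    have m0 : m 0 = 0 := congrFun em 0
    have m1 : m 1 = 1 := congrFun em 1
    have m2 : m 2 = 0 := congrFun em 2
    have n0 : n 0 = 0 := congrFun en 0
    have n1 : n 1 = 0 := congrFun en 1
    have n2 : n 2 = 1 := congrFun en 2
    obtain ⟨c, c0, c1⟩ := mem l hl
    obtain ⟨d, d0, d1⟩ := mem m hm
    obtain ⟨e, e0, e1⟩ := mem n hn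
    simp only [l0, l1, l2, m0, m1, m2, n0, n1, n2, map_one, map_zero, zero_mul, one_mul, add_zero,
      zero_add] at c0 c1 d0 d1 e0 e1
    -- the vectors indexed by `l, m` are proportional, and so are those indexed by `l, n`
    have hlm : α * (c * u 1) = d * u 1 := by
      rw [← d0]; linear_combination (d * u 1) * c0
    have hln : α ^ 2 * (c * u 1) = e * u 1 := by
      rw [← e0]; linear_combination (e * u 1) * c0
    rw [c1, d1] at hlm
    rw [c1, e1] at hln
    obtain ⟨-, h3, -, h4⟩ := coeffs_eq_zero hα (a := - m 3) (b := l 3) (c := 1 - m 4) (d := l 4)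
      (by simp only [map_neg, map_sub, map_one]; linear_combination hlm)
    rw [h3, h4] at hln
    obtain ⟨-, -, -, h⟩ := coeffs_eq_zero hα (a := - n 3) (b := 0) (c := - n 4) (d := 1)
      (by simp only [map_neg, map_zero, map_one] at hln ⊢; linear_combination hln)
    exact one_ne_zero h

open Classical in
/-- The nonzero vectors of an `F`-subspace `V`, sorted by the point they span. -/
lemma sum_points_card {F E : Type*} [Field F] [Fintype F] [Field E] [Fintype E]
    [Algebra F E] {n : ℕ} [Fintype (Submodule E (Fin n → E))] (V : Submodule F (Fin n → E)) :
    ∑ W ∈ Finset.univ.filter fun W : Submodule E (Fin n → E) => Module.finrank E W = 1,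
      (Fintype.card F ^ weightOf V W - 1) = Fintype.card F ^ Module.finrank F V - 1 := by
  have hcard : ∀ X : Submodule F (Fin n → E),
      (Finset.univ.filter fun v => v ∈ X ∧ v ≠ 0).card
        = Fintype.card F ^ Module.finrank F X - 1 := by
    intro X
    have h1 : (Finset.univ.filter fun v => v ∈ X ∧ v ≠ 0)
        = (Finset.univ.filter fun v => v ∈ X).erase 0 := by
      ext v; simp [and_comm]
    rw [h1, Finset.card_erase_of_mem (by simp), ← Module.card_eq_pow_finrank (K := F) (V := X),
      Fintype.card_subtype]
  rw [← hcard V, Finset.card_eq_sum_card_fiberwise (f := fun v => Submodule.span E {v})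
    (t := Finset.univ.filter fun W : Submodule E (Fin n → E) => Module.finrank E W = 1)]
  · refine Finset.sum_congr rfl fun W hW => ?_
    rw [weightOf, ← hcard, Finset.filter_filter]
    congr 1
    ext v
    simp only [Finset.mem_filter, Finset.mem_univ, true_and, Submodule.mem_inf,
      Submodule.restrictScalars_mem] at hW ⊢
    constructor
    · rintro ⟨⟨hV, hv⟩, h0⟩
      refine ⟨⟨hV, h0⟩, ?_⟩
      apply Submodule.eq_of_le_of_finrank_eq
      · simpa using hv
      · rw [hW, finrank_span_singleton h0]
    · rintro ⟨⟨hV, h0⟩, rfl⟩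
      exact ⟨⟨hV, Submodule.mem_span_singleton_self v⟩, h0⟩
  · intro v hv
    simp only [Finset.coe_filter, Finset.mem_univ, true_and, Set.mem_ofPred_eq] at hv ⊢
    exact finrank_span_singleton hv.2

/-- Remark 2.8 of the paper. With `[F_q(α):F_q] = 4` and
`U = {(λ1 + λ2 α + λ3 α², λ4 + λ1 α + λ5 α²)}`, a 5-dimensional `F_q`-subspace of
`(F_{q^4})²`, the linear set `L_U` has no point of weight greater than 2 and exactly
`q² + q + 1` points of weight 2, all remaining points having weight 1. -/
theorem stmt18 (q : ℕ) (F E : Type*) [Field F] [Fintype F] [Field E] [Fintype E]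
    [Algebra F E] (hq : Fintype.card F = q) (hE : Fintype.card E = q ^ 4)
    (α : E) (hα : (minpoly F α).natDegree = 4)
    (U : Submodule F (Fin 2 → E))
    (hU : (U : Set (Fin 2 → E)) = {v | ∃ lam : Fin 5 → F,
      v = ![algebraMap F E (lam 0) + algebraMap F E (lam 1) * α
              + algebraMap F E (lam 2) * α ^ 2,
            algebraMap F E (lam 3) + algebraMap F E (lam 0) * α
              + algebraMap F E (lam 4) * α ^ 2]}) :
    Module.finrank F U = 5 ∧
    (∀ W ∈ linearSet U, weightOf U W ≤ 2) ∧
    {W ∈ linearSet U | weightOf U W = 2}.ncard = q ^ 2 + q + 1 ∧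
    (∀ W ∈ linearSet U, weightOf U W = 2 ∨ weightOf U W = 1) := by
  classical
  subst hq
  set q := Fintype.card F with hq
  have hq1 : 1 < q := Fintype.one_lt_card
  have hE4 : Module.finrank F E = 4 := by
    have h := Module.card_eq_pow_finrank (K := F) (V := E)
    rw [hE] at h
    exact (Nat.pow_right_injective hq1 h).symm
  have hUr : U = LinearMap.range (paramMap F α) := by
    ext v
    rw [← SetLike.mem_coe, hU]
    exact ⟨fun ⟨l, hl⟩ => ⟨l, hl.symm⟩, fun ⟨l, hl⟩ => ⟨l, hl.symm⟩⟩
  have hU5 : Module.finrank F U = 5 := by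
    rw [hUr, LinearMap.finrank_range_of_inj (paramMap_injective hα)]; simp
  have hle : ∀ W : Submodule E (Fin 2 → E), Module.finrank E W = 1 → weightOf U W ≤ 2 := by
    intro W hW
    obtain ⟨⟨u, huW⟩, hu0, -⟩ := finrank_eq_one_iff'.1 hW
    have hspan : W = Submodule.span E {u} := by
      refine (Submodule.eq_of_le_of_finrank_eq (by simpa using huW) ?_).symm
      rw [hW, finrank_span_singleton (by simpa using hu0)]
    subst hspan
    have h := weight_le_two hα u
    rwa [LinearEquiv.finrank_eq (Submodule.equivMapOfInjective _ (paramMap_injective hα) _),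
      Submodule.map_comap_eq, ← hUr] at h
  have hge : ∀ W : Submodule E (Fin 2 → E), Module.finrank E W = 1 → 1 ≤ weightOf U W := by
    intro W hW
    have h1 := Submodule.finrank_sup_add_finrank_inf_eq U (Submodule.restrictScalars F W)
    have h2 := Submodule.finrank_le (U ⊔ Submodule.restrictScalars F W)
    have h3 : Module.finrank F (Submodule.restrictScalars F W) = 4 := by
      change Module.finrank F W = 4
      rw [← Module.finrank_mul_finrank F E W, hE4, hW]
    have h4 : Module.finrank F (Fin 2 → E) = 8 := by
      rw [Module.finrank_pi_fintype]; simp [hE4]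
    rw [hU5, h3] at h1
    rw [h4] at h2
    unfold weightOf
    omega
  have hmem : ∀ W : Submodule E (Fin 2 → E), W ∈ linearSet U ↔ Module.finrank E W = 1 := by
    intro W
    constructor
    · rintro ⟨u, -, h0, rfl⟩
      exact finrank_span_singleton h0
    · intro hW
      have h := hge W hW
      have hne : U ⊓ Submodule.restrictScalars F W ≠ ⊥ := by
        intro hb
        rw [weightOf, hb, finrank_bot] at h
        omega
      obtain ⟨u, ⟨hu, huW⟩, h0⟩ := Submodule.exists_mem_ne_zero_of_ne_bot hne
      refine ⟨u, hu, h0, (Submodule.eq_of_le_of_finrank_eq ?_ ?_).symm⟩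
      · simpa using huW
      · rw [hW, finrank_span_singleton h0]
  refine ⟨hU5, fun W hW => hle W ((hmem W).1 hW), ?_, fun W hW => ?_⟩
  · have : Fintype (Submodule E (Fin 2 → E)) := Fintype.ofFinite _
    set T := Finset.univ.filter fun W : Submodule E (Fin 2 → E) => Module.finrank E W = 1 with hT
    have hset : {W ∈ linearSet U | weightOf U W = 2}
        = ((T.filter fun W => weightOf U W = 2 : Finset _) : Set (Submodule E (Fin 2 → E))) := by
      ext W; simp [hT, hmem]
    rw [hset, Set.ncard_coe_finset]
    have hUsum := sum_points_card U
    have htop := sum_points_card (⊤ : Submodule F (Fin 2 → E))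
    rw [← hT, ← hq] at hUsum htop
    have hw4 : ∀ W ∈ T, q ^ weightOf (⊤ : Submodule F (Fin 2 → E)) W - 1 = q ^ 4 - 1 := by
      intro W hW
      have hW1 : Module.finrank E W = 1 := by simpa [hT] using hW
      have : weightOf (⊤ : Submodule F (Fin 2 → E)) W = 4 := by
        rw [weightOf, top_inf_eq]
        change Module.finrank F W = 4
        rw [← Module.finrank_mul_finrank F E W, hE4, hW1]
      rw [this]
    have h8 : Module.finrank F (⊤ : Submodule F (Fin 2 → E)) = 8 := by
      rw [finrank_top, Module.finrank_pi_fintype]; simp [hE4]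
    rw [Finset.sum_congr rfl hw4, Finset.sum_const, h8, smul_eq_mul] at htop
    have hw : ∀ W ∈ T, q ^ weightOf U W - 1
        = (q - 1) + if weightOf U W = 2 then q ^ 2 - q else 0 := by
      intro W hW
      have hW1 : Module.finrank E W = 1 := by simpa [hT] using hW
      have h1 := hle W hW1
      have h2 := hge W hW1
      have h3 : q ≤ q ^ 2 := Nat.le_self_pow (by norm_num) q
      split_ifs with h
      · rw [h]; omega
      · have : weightOf U W = 1 := by omega
        rw [this]; simp
    rw [Finset.sum_congr rfl hw, Finset.sum_add_distrib, Finset.sum_const, ← Finset.sum_filter,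
      Finset.sum_const, hU5, smul_eq_mul, smul_eq_mul] at hUsum
    set N := (T.filter fun W => weightOf U W = 2).card
    have p2 : q ≤ q ^ 2 := Nat.le_self_pow (by norm_num) q
    have p4 : 1 ≤ q ^ 4 := Nat.one_le_pow _ _ (by omega)
    have p5 : 1 ≤ q ^ 5 := Nat.one_le_pow _ _ (by omega)
    have p8 : 1 ≤ q ^ 8 := Nat.one_le_pow _ _ (by omega)
    zify [p2, p4, p5, p8, hq1.le] at hUsum htop ⊢
    have hqz : (1 : ℤ) < q := by exact_mod_cast hq1
    have hTc : (T.card : ℤ) = q ^ 4 + 1 := by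
      have hpos : (q : ℤ) ^ 4 - 1 ≠ 0 := by
        have := one_lt_pow₀ hqz (n := 4) (by norm_num)
        omega
      apply mul_right_cancel₀ hpos
      linear_combination htop
    rw [hTc] at hUsum
    have hpos : (q : ℤ) ^ 2 - q ≠ 0 := by nlinarith
    apply mul_right_cancel₀ hpos
    linear_combination hUsum
  · have h1 := hle W ((hmem W).1 hW)
    have h2 := hge W ((hmem W).1 hW)
    omega
end
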